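/- arXiv:1405.5318 — 6 statements merged into one kernel-verified Lean document; each statement's English description precedes it below -/
import Mathlib

section
/- Let α0,…,α4 be complex parameters with α0+α1+2α2+α3+α4 = 1 and let q, p be holomorphic functions on an open set U ⊆ ℂ∖{0,1} solving the Hamiltonian system for the Painlevé VI Hamiltonian H. If moreover q(t) ∉ {0,1,t} for all t ∈ U, then q satisfies the Painlevé VI equation q'' = (1/2)(1/q + 1/(q−1) + 1/(q−t))(q')² − (1/t + 1/(t−1) + 1/(q−t))q' + [q(q−1)(q−t)/(t²(t−1)²)]·(α + β t/q² + γ(t−1)/(q−1)² + δ t(t−1)/(q−t)²) with α = α1²/2, β = −α4²/2, γ = α3²/2, δ = (1−α0²)/2. -/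
/-- The Painlevé VI Hamiltonian. -/
noncomputable def PVIHamiltonian (α0 α1 α2 α3 α4 q p t : ℂ) : ℂ :=
  q * (q - 1) * (q - t) * p ^ 2
    - ((α0 - 1) * q * (q - 1) + α3 * q * (q - t) + α4 * (q - 1) * (q - t)) * p
    + α2 * (α1 + α2) * (q - t)

/-- The pair `(q, p)` solves the Hamiltonian system
`t(t-1) q' = ∂H/∂p`, `t(t-1) p' = -∂H/∂q` on `U`. -/
def SolvesHamSystem (α0 α1 α2 α3 α4 : ℂ) (U : Set ℂ) (q p : ℂ → ℂ) : Prop :=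
  ∀ t ∈ U,
    t * (t - 1) * deriv q t
        = deriv (fun p' => PVIHamiltonian α0 α1 α2 α3 α4 (q t) p' t) (p t) ∧
    t * (t - 1) * deriv p t
        = - deriv (fun q' => PVIHamiltonian α0 α1 α2 α3 α4 q' (p t) t) (q t)

/-!
A Hamiltonian `H = A p² - B p + C` that is quadratic in the momentum gives the velocity
`v = T q' = 2 A p - B`. Differentiating once more and eliminating `p = (v + B) / (2 A)`, the cross
terms `v B` cancel, and what remains is
`2 T v' = (∂_q A / A) v² + 2 T (∂_t A / A) v + A ∂_q (B² / A - 4 C) - 2 T A ∂_t (B / A)`.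
For Painlevé VI, `A = q (q - 1) (q - t)`, so `B / A` and `B² / A` have simple poles at `0, 1, t`,
and their partial fraction expansions produce the three singular terms of the equation. The relation
between the parameters turns the constant term `(α0 - 1 + α3 + α4)² - 4 α2 (α1 + α2)` of
`∂_q (B² / A - 4 C)` into `α1²`, and the term `∂_t (B / A)` turns `-(α0 - 1)²` into `1 - α0²`.
-/

open Filter Function Topology

section Calculus

variable {𝕜 : Type*} [NontriviallyNormedField 𝕜]

theorem logDeriv_sub_const (c x : 𝕜) : logDeriv (fun y => y - c) x = 1 / (x - c) := by
  rw [logDeriv_apply, deriv_sub_const_fun, deriv_id'']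

theorem hasDerivAt_const_div_sub_const (a : 𝕜) {c x : 𝕜} (hxc : x ≠ c) :
    HasDerivAt (fun y => a / (y - c)) (-(a / (x - c) ^ 2)) x := by
  simpa [neg_div] using
    (hasDerivAt_const x a).fun_div ((hasDerivAt_id x).sub_const c) (sub_ne_zero.2 hxc)

theorem deriv_mul_sub_one_mul {f : 𝕜 → 𝕜} {t : 𝕜} (hf : DifferentiableAt 𝕜 f t) :
    deriv (fun s => s * (s - 1) * f s) t = (2 * t - 1) * f t + t * (t - 1) * deriv f t := by
  refine ((((hasDerivAt_id' t).fun_mul ((hasDerivAt_id' t).sub_const 1)).fun_mul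
    hf.hasDerivAt).congr_deriv ?_).deriv
  ring

theorem differentiableAt_position {F : 𝕜 → 𝕜 → 𝕜} {q t : 𝕜}
    (hF : DifferentiableAt 𝕜 (uncurry F) (q, t)) : DifferentiableAt 𝕜 (fun x => F x t) q :=
  hF.comp (f := fun x => (x, t)) q (by fun_prop)

theorem differentiableAt_time {F : 𝕜 → 𝕜 → 𝕜} {q t : 𝕜}
    (hF : DifferentiableAt 𝕜 (uncurry F) (q, t)) : DifferentiableAt 𝕜 (F q) t :=
  hF.comp (f := fun s => (q, s)) t (by fun_prop)

theorem hasDerivAt_along_curve {F : 𝕜 → 𝕜 → 𝕜} {q : 𝕜 → 𝕜} {t : 𝕜}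
    (hF : DifferentiableAt 𝕜 (uncurry F) (q t, t)) (hq : DifferentiableAt 𝕜 q t) :
    HasDerivAt (fun s => F (q s) s)
      (deriv (fun x => F x t) (q t) * deriv q t + deriv (F (q t)) t) t := by
  have partial_position : deriv (fun x => F x t) (q t) = fderiv 𝕜 (uncurry F) (q t, t) (1, 0) :=
    (hF.hasFDerivAt.comp_hasDerivAt (f := fun x => (x, t)) (q t)
      ((hasDerivAt_id (q t)).prodMk (hasDerivAt_const (q t) t))).deriv
  have partial_time : deriv (F (q t)) t = fderiv 𝕜 (uncurry F) (q t, t) (0, 1) :=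
    (hF.hasFDerivAt.comp_hasDerivAt (f := fun s => (q t, s)) t
      ((hasDerivAt_const t (q t)).prodMk (hasDerivAt_id t))).deriv
  have along_curve : HasDerivAt (fun s => F (q s) s)
      (fderiv 𝕜 (uncurry F) (q t, t) (deriv q t, 1)) t :=
    hF.hasFDerivAt.comp_hasDerivAt (f := fun s => (q s, s)) t
      (hq.hasDerivAt.prodMk (hasDerivAt_id t))
  have velocity_decomp : (deriv q t, (1 : 𝕜)) = deriv q t • (1, 0) + (0, 1) := by simp
  rwa [velocity_decomp, map_add, map_smul, smul_eq_mul, mul_comm, ← partial_position,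
    ← partial_time] at along_curve

end Calculus

section QuadraticHamiltonian

variable {𝕜 : Type*} [NontriviallyNormedField 𝕜]

/-- The Hamiltonian `A p² - B p + C` of a system with one degree of freedom that is quadratic in
the momentum `p`. The coefficients are functions of the position `q` and the time `t`, in that
order. -/
def quadraticHamiltonian (A B C : 𝕜 → 𝕜 → 𝕜) (q p t : 𝕜) : 𝕜 :=
  A q t * p ^ 2 - B q t * p + C q t

variable {A B C : 𝕜 → 𝕜 → 𝕜} {q p t : 𝕜}

theorem deriv_quadraticHamiltonian_momentum :
    deriv (fun p' => quadraticHamiltonian A B C q p' t) p = 2 * (A q t * p) - B q t := by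
  have quadratic := (((hasDerivAt_pow 2 p).const_mul (A q t)).sub
    ((hasDerivAt_id' p).const_mul (B q t))).add_const (C q t)
  refine (quadratic.congr_deriv ?_).deriv
  push_cast
  ring

theorem deriv_quadraticHamiltonian_position
    (hA : DifferentiableAt 𝕜 (fun x => A x t) q) (hB : DifferentiableAt 𝕜 (fun x => B x t) q)
    (hC : DifferentiableAt 𝕜 (fun x => C x t) q) :
    deriv (fun q' => quadraticHamiltonian A B C q' p t) q =
      deriv (fun x => A x t) q * p ^ 2 - deriv (fun x => B x t) q * p
        + deriv (fun x => C x t) q :=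
  (((hA.hasDerivAt.mul_const (p ^ 2)).sub (hB.hasDerivAt.mul_const p)).add hC.hasDerivAt).deriv

theorem momentum_elimination {K : Type*} [Field K] {A Aq At B Bq Bt Cq T p q' p' : K} (hA : A ≠ 0)
    (position_eq : T * q' = 2 * (A * p) - B)
    (momentum_eq : T * p' = -(Aq * p ^ 2 - Bq * p + Cq)) :
    2 * T * (2 * ((Aq * q' + At) * p + A * p') - (Bq * q' + Bt)) =
      Aq / A * (T * q') ^ 2 + 2 * T * (At / A) * (T * q')
        + A * ((2 * B * Bq * A - B ^ 2 * Aq) / A ^ 2 - 4 * Cq)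
        - 2 * T * A * ((Bt * A - B * At) / A ^ 2) := by
  field_simp
  linear_combination (4 * A * Aq * p - 2 * A * Bq - 2 * T * At - Aq * (T * q' + 2 * A * p - B))
    * position_eq + 4 * A ^ 2 * momentum_eq

theorem velocity_deriv_of_quadraticHamiltonian {T q p : 𝕜 → 𝕜}
    (hA : DifferentiableAt 𝕜 (uncurry A) (q t, t)) (hB : DifferentiableAt 𝕜 (uncurry B) (q t, t))
    (hC : DifferentiableAt 𝕜 (fun x => C x t) (q t)) (hA0 : A (q t) t ≠ 0)
    (hq : DifferentiableAt 𝕜 q t) (hp : DifferentiableAt 𝕜 p t)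
    (position_eq : ∀ᶠ s in 𝓝 t, T s * deriv q s =
      deriv (fun p' => quadraticHamiltonian A B C (q s) p' s) (p s))
    (momentum_eq : T t * deriv p t =
      -deriv (fun q' => quadraticHamiltonian A B C q' (p t) t) (q t)) :
    2 * T t * deriv (fun s => T s * deriv q s) t =
      logDeriv (fun x => A x t) (q t) * (T t * deriv q t) ^ 2
        + 2 * T t * logDeriv (A (q t)) t * (T t * deriv q t)
        + A (q t) t * deriv (fun x => B x t ^ 2 / A x t - 4 * C x t) (q t)
        - 2 * T t * A (q t) t * deriv (fun s => B (q t) s / A (q t) s) t := by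
  have hAq := differentiableAt_position hA
  have hBq := differentiableAt_position hB
  have deriv_discriminant_div : deriv (fun x => B x t ^ 2 / A x t - 4 * C x t) (q t) =
      (2 * B (q t) t * deriv (fun x => B x t) (q t) * A (q t) t
        - B (q t) t ^ 2 * deriv (fun x => A x t) (q t)) / A (q t) t ^ 2
        - 4 * deriv (fun x => C x t) (q t) := by
    simpa using (((hBq.hasDerivAt.fun_pow 2).fun_div hAq.hasDerivAt hA0).fun_sub
      (hC.hasDerivAt.const_mul 4)).deriv
  have deriv_ratio : deriv (fun s => B (q t) s / A (q t) s) t =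
      (deriv (B (q t)) t * A (q t) t - B (q t) t * deriv (A (q t)) t) / A (q t) t ^ 2 :=
    deriv_fun_div (differentiableAt_time hB) (differentiableAt_time hA) hA0
  simp only [deriv_quadraticHamiltonian_momentum] at position_eq
  rw [deriv_quadraticHamiltonian_position hAq hBq hC] at momentum_eq
  have deriv_velocity : deriv (fun s => T s * deriv q s) t =
      2 * ((deriv (fun x => A x t) (q t) * deriv q t + deriv (A (q t)) t) * p t
        + A (q t) t * deriv p t)
        - (deriv (fun x => B x t) (q t) * deriv q t + deriv (B (q t)) t) :=
    ((((hasDerivAt_along_curve hA hq).mul hp.hasDerivAt).const_mul 2).sub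
      (hasDerivAt_along_curve hB hq)).congr_of_eventuallyEq position_eq |>.deriv
  rw [deriv_velocity, deriv_discriminant_div, deriv_ratio, logDeriv_apply, logDeriv_apply]
  exact momentum_elimination hA0 position_eq.self_of_nhds momentum_eq

end QuadraticHamiltonian

section PainleveVI

/-- The coefficient of `p²` in the Painlevé VI Hamiltonian: the `A` of `quadraticHamiltonian`. -/
def pviQuadraticCoeff (q t : ℂ) : ℂ := q * (q - 1) * (q - t)

/-- The coefficient of `-p` in the Painlevé VI Hamiltonian: the `B` of `quadraticHamiltonian`. -/
def pviLinearCoeff (α0 α3 α4 q t : ℂ) : ℂ :=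
  (α0 - 1) * q * (q - 1) + α3 * q * (q - t) + α4 * (q - 1) * (q - t)

/-- The part of the Painlevé VI Hamiltonian that does not involve `p`: the `C` of
`quadraticHamiltonian`. -/
def pviPotential (α1 α2 q t : ℂ) : ℂ := α2 * (α1 + α2) * (q - t)

theorem PVIHamiltonian_eq_quadraticHamiltonian (α0 α1 α2 α3 α4 : ℂ) :
    PVIHamiltonian α0 α1 α2 α3 α4 =
      quadraticHamiltonian pviQuadraticCoeff (pviLinearCoeff α0 α3 α4) (pviPotential α1 α2) :=
  rfl

variable {q t : ℂ}

theorem pviQuadraticCoeff_ne_zero (hq0 : q ≠ 0) (hq1 : q ≠ 1) (hqt : q ≠ t) :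
    pviQuadraticCoeff q t ≠ 0 :=
  mul_ne_zero (mul_ne_zero hq0 (sub_ne_zero.2 hq1)) (sub_ne_zero.2 hqt)

theorem logDeriv_pviQuadraticCoeff_position (hq0 : q ≠ 0) (hq1 : q ≠ 1) (hqt : q ≠ t) :
    logDeriv (fun x => pviQuadraticCoeff x t) q = 1 / q + 1 / (q - 1) + 1 / (q - t) := by
  have hq1' := sub_ne_zero.2 hq1
  change logDeriv (fun x => x * (x - 1) * (x - t)) q = _
  rw [logDeriv_mul (f := fun x => x * (x - 1)) (g := fun x => x - t) q
      (mul_ne_zero hq0 hq1') (sub_ne_zero.2 hqt) (by fun_prop) (by fun_prop),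
    logDeriv_mul (f := fun x => x) (g := fun x => x - 1) q hq0 hq1' (by fun_prop) (by fun_prop),
    logDeriv_id', logDeriv_sub_const, logDeriv_sub_const]

theorem logDeriv_pviQuadraticCoeff_time (hq0 : q ≠ 0) (hq1 : q ≠ 1) :
    logDeriv (pviQuadraticCoeff q) t = -(1 / (q - t)) := by
  change logDeriv (fun s => q * (q - 1) * (q - s)) t = _
  rw [logDeriv_const_mul t _ (mul_ne_zero hq0 (sub_ne_zero.2 hq1)), logDeriv_apply,
    deriv_const_sub_id', neg_div]

theorem pviLinearCoeff_div_pviQuadraticCoeff (α0 α3 α4 : ℂ)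
    (hq0 : q ≠ 0) (hq1 : q ≠ 1) (hqt : q ≠ t) :
    pviLinearCoeff α0 α3 α4 q t / pviQuadraticCoeff q t =
      α4 / q + α3 / (q - 1) + (α0 - 1) / (q - t) := by
  have hq1' := sub_ne_zero.2 hq1
  have hqt' := sub_ne_zero.2 hqt
  unfold pviLinearCoeff pviQuadraticCoeff
  field_simp
  ring

theorem pviLinearCoeff_sq_div_pviQuadraticCoeff (α0 α3 α4 : ℂ)
    (hq0 : q ≠ 0) (hq1 : q ≠ 1) (hqt : q ≠ t) :
    pviLinearCoeff α0 α3 α4 q t ^ 2 / pviQuadraticCoeff q t =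
      (α0 - 1 + α3 + α4) ^ 2 * q
        + ((α0 - 1) ^ 2 * (t - 1) - α3 ^ 2 * (t - 1) - α4 ^ 2 * (t + 1)
          - 2 * α3 * α4 * t - 2 * (α0 - 1) * α4)
        + α4 ^ 2 * t / q - α3 ^ 2 * (t - 1) / (q - 1)
        + (α0 - 1) ^ 2 * (t * (t - 1)) / (q - t) := by
  have hq1' := sub_ne_zero.2 hq1
  have hqt' := sub_ne_zero.2 hqt
  unfold pviLinearCoeff pviQuadraticCoeff
  field_simp
  ring

theorem deriv_pviLinearCoeff_div_pviQuadraticCoeff_time (α0 α3 α4 : ℂ)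
    (hq0 : q ≠ 0) (hq1 : q ≠ 1) (hqt : q ≠ t) :
    deriv (fun s => pviLinearCoeff α0 α3 α4 q s / pviQuadraticCoeff q s) t =
      (α0 - 1) / (q - t) ^ 2 := by
  have partial_fractions : (fun s => pviLinearCoeff α0 α3 α4 q s / pviQuadraticCoeff q s)
      =ᶠ[𝓝 t] fun s => α4 / q + α3 / (q - 1) + (α0 - 1) / (q - s) := by
    filter_upwards [isOpen_ne.mem_nhds hqt.symm] with s hs
    exact pviLinearCoeff_div_pviQuadraticCoeff α0 α3 α4 hq0 hq1 (Ne.symm hs)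
  rw [partial_fractions.deriv_eq, deriv_const_add]
  simpa using ((hasDerivAt_const t (α0 - 1)).fun_div ((hasDerivAt_id t).const_sub q)
    (sub_ne_zero.2 hqt)).deriv

theorem hasDerivAt_pviLinearCoeff_sq_div_pviQuadraticCoeff_position (α0 α3 α4 : ℂ)
    (hq0 : q ≠ 0) (hq1 : q ≠ 1) (hqt : q ≠ t) :
    HasDerivAt (fun x => pviLinearCoeff α0 α3 α4 x t ^ 2 / pviQuadraticCoeff x t)
      ((α0 - 1 + α3 + α4) ^ 2 - α4 ^ 2 * t / q ^ 2 + α3 ^ 2 * (t - 1) / (q - 1) ^ 2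
        - (α0 - 1) ^ 2 * (t * (t - 1)) / (q - t) ^ 2) q := by
  have pole_zero : HasDerivAt (fun x => α4 ^ 2 * t / x) (-(α4 ^ 2 * t / q ^ 2)) q := by
    simpa only [sub_zero] using hasDerivAt_const_div_sub_const (α4 ^ 2 * t) hq0
  have pole_one := hasDerivAt_const_div_sub_const (α3 ^ 2 * (t - 1)) hq1
  have pole_time := hasDerivAt_const_div_sub_const ((α0 - 1) ^ 2 * (t * (t - 1))) hqt
  have linear_part := ((hasDerivAt_id' q).const_mul ((α0 - 1 + α3 + α4) ^ 2)).add_const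
    ((α0 - 1) ^ 2 * (t - 1) - α3 ^ 2 * (t - 1) - α4 ^ 2 * (t + 1)
      - 2 * α3 * α4 * t - 2 * (α0 - 1) * α4)
  have expansion := ((linear_part.fun_add pole_zero).fun_sub pole_one).fun_add pole_time
  refine (expansion.congr_of_eventuallyEq ?_).congr_deriv (by ring)
  filter_upwards [isOpen_ne.mem_nhds hq0, isOpen_ne.mem_nhds hq1, isOpen_ne.mem_nhds hqt]
    with x hx0 hx1 hxt
  exact pviLinearCoeff_sq_div_pviQuadraticCoeff α0 α3 α4 hx0 hx1 hxt

variable {α0 α1 α2 α3 α4 : ℂ}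

theorem deriv_pviLinearCoeff_sq_div_sub_pviPotential
    (hα : α0 + α1 + 2 * α2 + α3 + α4 = 1) (hq0 : q ≠ 0) (hq1 : q ≠ 1) (hqt : q ≠ t) :
    deriv (fun x => pviLinearCoeff α0 α3 α4 x t ^ 2 / pviQuadraticCoeff x t
        - 4 * pviPotential α1 α2 x t) q =
      α1 ^ 2 - α4 ^ 2 * t / q ^ 2 + α3 ^ 2 * (t - 1) / (q - 1) ^ 2
        - (α0 - 1) ^ 2 * (t * (t - 1)) / (q - t) ^ 2 := by
  have potential : HasDerivAt (fun x => pviPotential α1 α2 x t) (α2 * (α1 + α2)) q := by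
    simpa only [pviPotential, mul_one] using
      ((hasDerivAt_id' q).sub_const t).const_mul (α2 * (α1 + α2))
  rw [((hasDerivAt_pviLinearCoeff_sq_div_pviQuadraticCoeff_position α0 α3 α4 hq0 hq1 hqt).fun_sub
    (potential.const_mul 4)).deriv]
  linear_combination (α0 - 1 + α3 + α4 - α1 - 2 * α2) * hα

theorem velocity_deriv_of_solvesHamSystem {U : Set ℂ} {q p : ℂ → ℂ}
    (hα : α0 + α1 + 2 * α2 + α3 + α4 = 1) (hU : U ∈ 𝓝 t)
    (hq : DifferentiableAt ℂ q t) (hp : DifferentiableAt ℂ p t)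
    (hsys : SolvesHamSystem α0 α1 α2 α3 α4 U q p)
    (hq0 : q t ≠ 0) (hq1 : q t ≠ 1) (hqt : q t ≠ t) :
    2 * (t * (t - 1)) * deriv (fun s => s * (s - 1) * deriv q s) t =
      (1 / q t + 1 / (q t - 1) + 1 / (q t - t)) * (t * (t - 1) * deriv q t) ^ 2
        - 2 * (t * (t - 1)) * (1 / (q t - t)) * (t * (t - 1) * deriv q t)
        + q t * (q t - 1) * (q t - t)
          * (α1 ^ 2 - α4 ^ 2 * t / q t ^ 2 + α3 ^ 2 * (t - 1) / (q t - 1) ^ 2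
            + (1 - α0 ^ 2) * (t * (t - 1)) / (q t - t) ^ 2) := by
  simp only [SolvesHamSystem, PVIHamiltonian_eq_quadraticHamiltonian] at hsys
  have eliminated := velocity_deriv_of_quadraticHamiltonian (T := fun s => s * (s - 1))
    (by unfold uncurry pviQuadraticCoeff; fun_prop) (by unfold uncurry pviLinearCoeff; fun_prop)
    (by unfold pviPotential; fun_prop) (pviQuadraticCoeff_ne_zero hq0 hq1 hqt) hq hp
    (mem_of_superset hU fun s hs => (hsys s hs).1) (hsys t (mem_of_mem_nhds hU)).2
  rw [logDeriv_pviQuadraticCoeff_position hq0 hq1 hqt, logDeriv_pviQuadraticCoeff_time hq0 hq1,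
    deriv_pviLinearCoeff_sq_div_sub_pviPotential hα hq0 hq1 hqt,
    deriv_pviLinearCoeff_div_pviQuadraticCoeff_time α0 α3 α4 hq0 hq1 hqt] at eliminated
  rw [eliminated, pviQuadraticCoeff]
  ring

theorem second_deriv_of_velocity_deriv {K : Type*} [Field K] [NeZero (2 : K)]
    {t q' q'' L M N F : K} (ht0 : t ≠ 0) (ht1 : t - 1 ≠ 0)
    (h : 2 * (t * (t - 1)) * ((2 * t - 1) * q' + t * (t - 1) * q'') =
      L * (t * (t - 1) * q') ^ 2 - 2 * (t * (t - 1)) * M * (t * (t - 1) * q') + N * F) :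
    q'' = 1 / 2 * L * q' ^ 2 - (1 / t + 1 / (t - 1) + M) * q'
      + N / (t ^ 2 * (t - 1) ^ 2) * (F / 2) := by
  field_simp
  linear_combination h

end PainleveVI

/-- a solution of the Hamiltonian system with `q(t) ∉ {0,1,t}`
satisfies the Painlevé VI equation. -/
theorem hamiltonian_system_implies_painleveVI
    (α0 α1 α2 α3 α4 : ℂ) (hα : α0 + α1 + 2 * α2 + α3 + α4 = 1)
    (U : Set ℂ) (hUopen : IsOpen U) (hU01 : U ⊆ ({0, 1} : Set ℂ)ᶜ)
    (q p : ℂ → ℂ)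
    (hq : DifferentiableOn ℂ q U) (hp : DifferentiableOn ℂ p U)
    (hsys : SolvesHamSystem α0 α1 α2 α3 α4 U q p)
    (hreg : ∀ t ∈ U, q t ≠ 0 ∧ q t ≠ 1 ∧ q t ≠ t) :
    ∀ t ∈ U,
      deriv (deriv q) t
        = (1 / 2) * (1 / q t + 1 / (q t - 1) + 1 / (q t - t)) * (deriv q t) ^ 2
          - (1 / t + 1 / (t - 1) + 1 / (q t - t)) * deriv q t
          + q t * (q t - 1) * (q t - t) / (t ^ 2 * (t - 1) ^ 2)
            * (α1 ^ 2 / 2 + (-(α4 ^ 2) / 2) * t / (q t) ^ 2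
               + (α3 ^ 2 / 2) * (t - 1) / (q t - 1) ^ 2
               + ((1 - α0 ^ 2) / 2) * (t * (t - 1)) / (q t - t) ^ 2) := by
  intro t ht
  have hU : U ∈ 𝓝 t := hUopen.mem_nhds ht
  obtain ⟨hq0, hq1, hqt⟩ := hreg t ht
  have ht0 : t ≠ 0 := fun h => hU01 ht (Or.inl h)
  have ht1 : t - 1 ≠ 0 := sub_ne_zero.2 fun h => hU01 ht (Or.inr h)
  have velocity_eq := velocity_deriv_of_solvesHamSystem hα hU (hq.differentiableAt hU)
    (hp.differentiableAt hU) hsys hq0 hq1 hqt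
  rw [deriv_mul_sub_one_mul ((hq.deriv hUopen).differentiableAt hU)] at velocity_eq
  rw [second_deriv_of_velocity_deriv ht0 ht1 velocity_eq]
  ring
end

section
/- Bäcklund transformation s2: let α0,…,α4 be complex parameters with α0+α1+2α2+α3+α4 = 1 and let q, p be holomorphic functions on an open set U ⊆ ℂ∖{0,1} solving the Hamiltonian system for the Painlevé VI Hamiltonian with parameters (α0,α1,α2,α3,α4), and suppose p is nowhere zero on U. Then the pair (q + α2/p, p) solves the Hamiltonian system with parameters (α0+α2, α1+α2, −α2, α3+α2, α4+α2). -/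
/-!
The shear `(q, p) ↦ (q + f(p), p)` is canonical for every `f`, so it carries solutions of Hamilton's
equations for `H` to solutions for any `K` with `K(q + f(p), p) = H(q, p) + c`, where `c` does not
depend on `(q, p)`. For `f(p) = α₂ / p`, the Painlevé VI Hamiltonians with the old and the new
parameters are related in this way, with a `c` depending only on `t` and the parameters.
-/

open Function Topology

section Shear

variable {𝕜 : Type*} [NontriviallyNormedField 𝕜]

/-- Hamilton's equations `s q' = ∂H/∂p`, `s p' = -∂H/∂q` at the single time `t`. Here `H q p` is the
Hamiltonian with `t` held fixed, and the factor `s` accounts for a rescaling of time. -/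
def HamiltonEquationsAt (s : 𝕜) (H : 𝕜 → 𝕜 → 𝕜) (q p : 𝕜 → 𝕜) (t : 𝕜) : Prop :=
  s * deriv q t = deriv (fun y => H (q t) y) (p t) ∧
    s * deriv p t = -deriv (fun x => H x (p t)) (q t)

variable {H K : 𝕜 → 𝕜 → 𝕜} {f : 𝕜 → 𝕜} {c : 𝕜}

theorem deriv_fst_of_shear {x₀ y₀ : 𝕜}
    (hKH : ∀ᶠ z in 𝓝 (x₀, y₀), K (z.1 + f z.2) z.2 = H z.1 z.2 + c) :
    deriv (fun x => K x y₀) (x₀ + f y₀) = deriv (fun x => H x y₀) x₀ := by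
  have hslice : (fun x => K (x + f y₀) y₀) =ᶠ[𝓝 x₀] fun x => H x y₀ + c :=
    (Continuous.prodMk_left y₀).continuousAt.eventually hKH
  rw [← deriv_comp_add_const, hslice.deriv_eq, deriv_add_const]

theorem deriv_snd_of_shear {x₀ y₀ : 𝕜}
    (hK : DifferentiableAt 𝕜 (uncurry K) (x₀ + f y₀, y₀)) (hf : DifferentiableAt 𝕜 f y₀)
    (hKH : ∀ᶠ z in 𝓝 (x₀, y₀), K (z.1 + f z.2) z.2 = H z.1 z.2 + c) :
    deriv (fun y => H x₀ y) y₀ =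
      deriv f y₀ * deriv (fun x => K x y₀) (x₀ + f y₀) + deriv (fun y => K (x₀ + f y₀) y) y₀ := by
  have hslice : (fun y => K (x₀ + f y) y) =ᶠ[𝓝 y₀] fun y => H x₀ y + c :=
    (Continuous.prodMk_right x₀).continuousAt.eventually hKH
  set L := fderiv 𝕜 (uncurry K) (x₀ + f y₀, y₀)
  have hfst : HasDerivAt (fun x => K x y₀) (L (1, 0)) (x₀ + f y₀) :=
    hK.hasFDerivAt.comp_hasDerivAt (f := fun x => (x, y₀)) (x₀ + f y₀)
      ((hasDerivAt_id _).prodMk (hasDerivAt_const _ y₀))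
  have hsnd : HasDerivAt (fun y => K (x₀ + f y₀) y) (L (0, 1)) y₀ :=
    hK.hasFDerivAt.comp_hasDerivAt (f := fun y => (x₀ + f y₀, y)) y₀
      ((hasDerivAt_const y₀ _).prodMk (hasDerivAt_id y₀))
  have hcurve : HasDerivAt (fun y => K (x₀ + f y) y) (L (deriv f y₀, 1)) y₀ :=
    hK.hasFDerivAt.comp_hasDerivAt (f := fun y => (x₀ + f y, y)) y₀
      ((hf.hasDerivAt.const_add x₀).prodMk (hasDerivAt_id y₀))
  calc deriv (fun y => H x₀ y) y₀
      = L (deriv f y₀, 1) := by rw [← deriv_add_const, ← hslice.deriv_eq, hcurve.deriv]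
    _ = L (deriv f y₀ • (1, 0) + (0, 1)) := by simp
    _ = deriv f y₀ * L (1, 0) + L (0, 1) := by rw [map_add, map_smul, smul_eq_mul]
    _ = _ := by rw [hfst.deriv, hsnd.deriv]

theorem HamiltonEquationsAt.shear {s t : 𝕜} {q p : 𝕜 → 𝕜} (h : HamiltonEquationsAt s H q p t)
    (hq : DifferentiableAt 𝕜 q t) (hp : DifferentiableAt 𝕜 p t)
    (hK : DifferentiableAt 𝕜 (uncurry K) (q t + f (p t), p t)) (hf : DifferentiableAt 𝕜 f (p t))
    (hKH : ∀ᶠ z in 𝓝 (q t, p t), K (z.1 + f z.2) z.2 = H z.1 z.2 + c) :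
    HamiltonEquationsAt s K (fun τ => q τ + f (p τ)) p t := by
  obtain ⟨hq', hp'⟩ := h
  have hshear : deriv (fun τ => q τ + f (p τ)) t = deriv q t + deriv f (p t) * deriv p t :=
    (hq.hasDerivAt.add (hf.hasDerivAt.comp t hp.hasDerivAt)).deriv
  have hfst := deriv_fst_of_shear hKH
  have hsnd := deriv_snd_of_shear hK hf hKH
  refine ⟨?_, by rw [hp', hfst]⟩
  rw [hshear]
  linear_combination hq' + deriv f (p t) * hp' + hsnd + deriv f (p t) * hfst

end Shear

theorem differentiable_uncurry_PVIHamiltonian (α0 α1 α2 α3 α4 t : ℂ) :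
    Differentiable ℂ (uncurry fun q p => PVIHamiltonian α0 α1 α2 α3 α4 q p t) := by
  unfold PVIHamiltonian uncurry
  fun_prop

theorem PVIHamiltonian_shear {α0 α1 α2 α3 α4 : ℂ} (hα : α0 + α1 + 2 * α2 + α3 + α4 = 1)
    (q t : ℂ) {p : ℂ} (hp : p ≠ 0) :
    PVIHamiltonian (α0 + α2) (α1 + α2) (-α2) (α3 + α2) (α4 + α2) (q + α2 / p) p t =
      PVIHamiltonian α0 α1 α2 α3 α4 q p t + α2 * ((α1 - α0 + 1) * t - (α1 + α2 + α3)) := by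
  obtain rfl : α1 = 1 - α0 - 2 * α2 - α3 - α4 := by linear_combination hα
  unfold PVIHamiltonian
  field_simp
  ring

/-- the Bäcklund transformation s₂. -/
theorem backlund_s2
    (α0 α1 α2 α3 α4 : ℂ) (hα : α0 + α1 + 2 * α2 + α3 + α4 = 1)
    (U : Set ℂ) (hUopen : IsOpen U) (hU01 : U ⊆ ({0, 1} : Set ℂ)ᶜ)
    (q p : ℂ → ℂ)
    (hq : DifferentiableOn ℂ q U) (hp : DifferentiableOn ℂ p U)
    (hsys : SolvesHamSystem α0 α1 α2 α3 α4 U q p)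
    (hp0 : ∀ t ∈ U, p t ≠ 0) :
    SolvesHamSystem (α0 + α2) (α1 + α2) (-α2) (α3 + α2) (α4 + α2) U
      (fun t => q t + α2 / p t) p := by
  intro t ht
  have hU : U ∈ 𝓝 t := hUopen.mem_nhds ht
  have hH : HamiltonEquationsAt (t * (t - 1))
      (fun x y => PVIHamiltonian α0 α1 α2 α3 α4 x y t) q p t := hsys t ht
  have hf : DifferentiableAt ℂ (fun y => α2 / y) (p t) :=
    (differentiableAt_const α2).div differentiableAt_id (hp0 t ht)
  refine hH.shear (hq.differentiableAt hU) (hp.differentiableAt hU)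
    (differentiable_uncurry_PVIHamiltonian _ _ _ _ _ t _) hf
    ((continuousAt_snd.eventually_ne (hp0 t ht)).mono fun z hz => PVIHamiltonian_shear hα z.1 t hz)
end

section
/- Bäcklund transformation r3: let α0,…,α4 be complex parameters with α0+α1+2α2+α3+α4 = 1 and let q, p be holomorphic functions on an open set U ⊆ ℂ∖{0,1} solving the Hamiltonian system for the Painlevé VI Hamiltonian with parameters (α0,α1,α2,α3,α4), and suppose q is nowhere zero on U. Then the pair (t/q, −q(pq+α2)/t) solves the Hamiltonian system with parameters (α3,α4,α2,α0,α1). -/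
/-!
At each fixed `t ≠ 0` the map `(q, p) ↦ (Q, P) = (t / q, -q (p q + α₂) / t)` is symplectic, since
`∂Q/∂q * ∂P/∂p = (-t / q²) * (-q² / t) = 1` and `∂Q/∂p = 0`. Its explicit dependence on `t` is the
flow of the Hamiltonian `(t - 1) Q P`: `t (t - 1) ∂Q/∂t = (t - 1) Q` and
`t (t - 1) ∂P/∂t = -(t - 1) P`. So Hamilton's equations for `H` become Hamilton's equations for
`H + (t - 1) Q P`, and this function agrees with the Painlevé VI Hamiltonian in `(Q, P)` with
permuted parameters up to a term that depends on `t` alone.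
-/

/-- The new position `t / q` of the transformation `r₃`; it has the junk value `0` at `q = 0`. -/
noncomputable def r3Position (q t : ℂ) : ℂ :=
  t / q

/-- The new momentum `-q (p q + α₂) / t` of the transformation `r₃`, conjugate to `r3Position`; it
has the junk value `0` at `t = 0`. -/
noncomputable def r3Momentum (α2 q p t : ℂ) : ℂ :=
  -(q * (p * q + α2)) / t

theorem hasDerivAt_comp_of_differentiableAt_uncurry {𝕜 E : Type*} [NontriviallyNormedField 𝕜]
    [NormedAddCommGroup E] [NormedSpace 𝕜 E] {f : 𝕜 → 𝕜 → E} {u v : 𝕜 → 𝕜} {u' v' x : 𝕜}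
    (hf : DifferentiableAt 𝕜 f.uncurry (u x, v x))
    (hu : HasDerivAt u u' x) (hv : HasDerivAt v v' x) :
    HasDerivAt (fun s => f (u s) (v s))
      (u' • deriv (fun y => f y (v x)) (u x) + v' • deriv (fun z => f (u x) z) (v x)) x := by
  set f' := fderiv 𝕜 f.uncurry (u x, v x)
  have hf' : HasFDerivAt f.uncurry f' (u x, v x) := hf.hasFDerivAt
  have deriv_fst : deriv (fun y => f y (v x)) (u x) = f' (1, 0) :=
    (HasFDerivAt.comp_hasDerivAt (f := fun y => (y, v x)) (u x) hf'
      ((hasDerivAt_id _).prodMk (hasDerivAt_const _ _))).deriv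
  have deriv_snd : deriv (fun z => f (u x) z) (v x) = f' (0, 1) :=
    (HasFDerivAt.comp_hasDerivAt (f := fun z => (u x, z)) (v x) hf'
      ((hasDerivAt_const _ _).prodMk (hasDerivAt_id _))).deriv
  have f'_apply : f' (u', v') = u' • f' (1, 0) + v' • f' (0, 1) := by
    rw [← map_smul, ← map_smul, ← map_add]
    simp
  rw [deriv_fst, deriv_snd, ← f'_apply]
  exact hf'.comp_hasDerivAt x (hu.prodMk hv)

theorem differentiable_uncurry_pviHamiltonian (α0 α1 α2 α3 α4 t : ℂ) :
    Differentiable ℂ (fun q p => PVIHamiltonian α0 α1 α2 α3 α4 q p t).uncurry := by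
  unfold PVIHamiltonian Function.uncurry
  fun_prop

section Curve

variable {α2 s τ' q' p' : ℂ} {τ q p : ℂ → ℂ}

theorem hasDerivAt_r3Position (hτ : HasDerivAt τ τ' s) (hq : HasDerivAt q q' s) (hqs : q s ≠ 0) :
    HasDerivAt (fun s => r3Position (q s) (τ s)) (τ' / q s - τ s / q s ^ 2 * q') s := by
  refine (hτ.div hq hqs).congr_deriv ?_
  field_simp

theorem hasDerivAt_r3Momentum (hτ : HasDerivAt τ τ' s) (hq : HasDerivAt q q' s)
    (hp : HasDerivAt p p' s) (hτs : τ s ≠ 0) :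
    HasDerivAt (fun s => r3Momentum α2 (q s) (p s) (τ s))
      (q s * (p s * q s + α2) / τ s ^ 2 * τ'
        - ((2 * p s * q s + α2) * q' + q s ^ 2 * p') / τ s) s := by
  refine ((hq.mul ((hp.mul hq).add_const α2)).neg.div hτ hτs).congr_deriv ?_
  simp only [Pi.neg_apply, Pi.mul_apply]
  field_simp
  ring

end Curve

section Pullback

variable {α0 α1 α2 α3 α4 q t : ℂ}

-- The factor `p * q + α2` is `-Q * P` in the new coordinates `Q`, `P`.
theorem pviHamiltonian_r3 (hα : α0 + α1 + 2 * α2 + α3 + α4 = 1) (hq : q ≠ 0) (ht : t ≠ 0) (p : ℂ) :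
    PVIHamiltonian α3 α4 α2 α0 α1 (r3Position q t) (r3Momentum α2 q p t) t =
      PVIHamiltonian α0 α1 α2 α3 α4 q p t - (t - 1) * (p * q + α2)
        + α2 * (α1 + α2 + α3) * (t - 1) := by
  obtain rfl : α1 = 1 - α0 - 2 * α2 - α3 - α4 := by linear_combination hα
  unfold PVIHamiltonian r3Position r3Momentum
  field_simp
  ring

theorem directional_deriv_pviHamiltonian_r3 (hα : α0 + α1 + 2 * α2 + α3 + α4 = 1) (hq : q ≠ 0)
    (ht : t ≠ 0) (p u v : ℂ) :
    -(t / q ^ 2) * u *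
          deriv (fun Q => PVIHamiltonian α3 α4 α2 α0 α1 Q (r3Momentum α2 q p t) t) (r3Position q t)
        - ((2 * p * q + α2) * u + q ^ 2 * v) / t *
          deriv (fun P => PVIHamiltonian α3 α4 α2 α0 α1 (r3Position q t) P t)
            (r3Momentum α2 q p t) =
      u * (deriv (fun q' => PVIHamiltonian α0 α1 α2 α3 α4 q' p t) q - (t - 1) * p) +
        v * (deriv (fun p' => PVIHamiltonian α0 α1 α2 α3 α4 q p' t) p - (t - 1) * q) := by
  let x : ℂ → ℂ := fun s => q + s * u
  let y : ℂ → ℂ := fun s => p + s * v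
  have hx0 : x 0 = q := by simp [x]
  have hy0 : y 0 = p := by simp [y]
  have hx : HasDerivAt x u 0 := (hasDerivAt_mul_const u).const_add q
  have hy : HasDerivAt y v 0 := (hasDerivAt_mul_const v).const_add p
  have ht' : HasDerivAt (fun _ : ℂ => t) 0 0 := hasDerivAt_const 0 t
  have lhs_deriv := hasDerivAt_comp_of_differentiableAt_uncurry
    (differentiable_uncurry_pviHamiltonian α3 α4 α2 α0 α1 t _)
    (hasDerivAt_r3Position ht' hx (hx0.symm ▸ hq)) (hasDerivAt_r3Momentum (α2 := α2) ht' hx hy ht)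
  have rhs_deriv := ((hasDerivAt_comp_of_differentiableAt_uncurry
    (differentiable_uncurry_pviHamiltonian α0 α1 α2 α3 α4 t _) hx hy).sub
      (((hy.mul hx).add_const α2).const_mul (t - 1))).add_const (α2 * (α1 + α2 + α3) * (t - 1))
  have identity_near : ∀ᶠ s in nhds 0,
      PVIHamiltonian α3 α4 α2 α0 α1 (r3Position (x s) t) (r3Momentum α2 (x s) (y s) t) t =
        PVIHamiltonian α0 α1 α2 α3 α4 (x s) (y s) t - (t - 1) * (y s * x s + α2)
          + α2 * (α1 + α2 + α3) * (t - 1) := by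
    filter_upwards [hx.continuousAt.eventually_ne (hx0.symm ▸ hq)] with s hxs
    exact pviHamiltonian_r3 hα hxs ht (y s)
  have derivs_eq := lhs_deriv.unique (rhs_deriv.congr_of_eventuallyEq identity_near)
  simp only [hx0, hy0, smul_eq_mul] at derivs_eq
  linear_combination derivs_eq

theorem deriv_momentum_pviHamiltonian_r3 (hα : α0 + α1 + 2 * α2 + α3 + α4 = 1) (hq : q ≠ 0)
    (ht : t ≠ 0) (p : ℂ) :
    deriv (fun P => PVIHamiltonian α3 α4 α2 α0 α1 (r3Position q t) P t) (r3Momentum α2 q p t) =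
      (t - 1) * r3Position q t
        - t / q ^ 2 * deriv (fun p' => PVIHamiltonian α0 α1 α2 α3 α4 q p' t) p := by
  have along_p := directional_deriv_pviHamiltonian_r3 hα hq ht p 0 1
  simp only [mul_zero, zero_mul, zero_add, zero_sub, mul_one, one_mul] at along_p
  rw [r3Position] at along_p ⊢
  field_simp at along_p ⊢
  linear_combination -along_p

theorem deriv_position_pviHamiltonian_r3 (hα : α0 + α1 + 2 * α2 + α3 + α4 = 1) (hq : q ≠ 0)
    (ht : t ≠ 0) (p : ℂ) :
    deriv (fun Q => PVIHamiltonian α3 α4 α2 α0 α1 Q (r3Momentum α2 q p t) t) (r3Position q t) =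
      (t - 1) * r3Momentum α2 q p t
        + (2 * p * q + α2) / t * deriv (fun p' => PVIHamiltonian α0 α1 α2 α3 α4 q p' t) p
        - q ^ 2 / t * deriv (fun q' => PVIHamiltonian α0 α1 α2 α3 α4 q' p t) q := by
  have along_q := directional_deriv_pviHamiltonian_r3 hα hq ht p 1 0
  simp only [mul_zero, zero_mul, add_zero, mul_one, one_mul] at along_q
  rw [deriv_momentum_pviHamiltonian_r3 hα hq ht p] at along_q
  generalize deriv (fun Q => PVIHamiltonian α3 α4 α2 α0 α1 Q _ t) _ = K at along_q ⊢
  rw [r3Position] at along_q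
  rw [r3Momentum]
  field_simp at along_q ⊢
  linear_combination -along_q

end Pullback

/-- the Bäcklund transformation r₃. -/
theorem backlund_r3
    (α0 α1 α2 α3 α4 : ℂ) (hα : α0 + α1 + 2 * α2 + α3 + α4 = 1)
    (U : Set ℂ) (hUopen : IsOpen U) (hU01 : U ⊆ ({0, 1} : Set ℂ)ᶜ)
    (q p : ℂ → ℂ)
    (hq : DifferentiableOn ℂ q U) (hp : DifferentiableOn ℂ p U)
    (hsys : SolvesHamSystem α0 α1 α2 α3 α4 U q p)
    (hq0 : ∀ t ∈ U, q t ≠ 0) :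
    SolvesHamSystem α3 α4 α2 α0 α1 U
      (fun t => t / q t) (fun t => -(q t * (p t * q t + α2)) / t) := by
  change SolvesHamSystem α3 α4 α2 α0 α1 U (fun t => r3Position (q t) t)
    (fun t => r3Momentum α2 (q t) (p t) t)
  intro t ht
  obtain ⟨hamilton_q, hamilton_p⟩ := hsys t ht
  have hqt : q t ≠ 0 := hq0 t ht
  have ht0 : t ≠ 0 := fun h => hU01 ht (Or.inl h)
  have dq : HasDerivAt q (deriv q t) t := (hq.differentiableAt (hUopen.mem_nhds ht)).hasDerivAt
  have dp : HasDerivAt p (deriv p t) t := (hp.differentiableAt (hUopen.mem_nhds ht)).hasDerivAt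
  constructor
  · rw [(hasDerivAt_r3Position (hasDerivAt_id' t) dq hqt).deriv,
      deriv_momentum_pviHamiltonian_r3 hα hqt ht0, ← hamilton_q, r3Position]
    ring
  · rw [(hasDerivAt_r3Momentum (hasDerivAt_id' t) dq dp ht0).deriv,
      deriv_position_pviHamiltonian_r3 hα hqt ht0, ← hamilton_q,
      ← neg_eq_iff_eq_neg.mpr hamilton_p, r3Momentum]
    field_simp
    ring
end

section
/- The E_VI equation: let α0,…,α4 be complex parameters with α0+α1+2α2+α3+α4 = 1, let q, p be holomorphic functions on an open set U ⊆ ℂ∖{0,1} solving the Hamiltonian system for the Painlevé VI Hamiltonian, and set b1 = (α3+α4)/2, b2 = (α4−α3)/2, b3 = (α0+α1−1)/2, b4 = (α0−α1−1)/2, C = (α0−1)²+α1²+α3²+α4². Define h(t) = h0(q(t),p(t),t) − (C/24)(2t−1), where h0 is the modified Hamiltonian. Then (dh/dt)·(t(t−1)d²h/dt²)² + ((dh/dt)(2h − (2t−1)dh/dt) + b1b2b3b4)² = ∏_{k=1}^4 (dh/dt + b_k²) on U. -/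
/-- The modified Painlevé VI Hamiltonian h₀. -/
noncomputable def PVIModifiedHamiltonian (α0 α1 α2 α3 α4 q p t : ℂ) : ℂ :=
  PVIHamiltonian α0 α1 α2 α3 α4 q p t
    + t / 12 * (2 * (α0 - 1) ^ 2 - α1 ^ 2 + 2 * α3 ^ 2 - α4 ^ 2 + 6 * (α0 - 1) * α3)
    + (t - 1) / 12 * (2 * (α0 - 1) ^ 2 - α1 ^ 2 - α3 ^ 2 + 2 * α4 ^ 2 + 6 * (α0 - 1) * α4)

/-!
The shifted Hamiltonian is affine in time: `h = A(q, p) + t B(q, p)`. Energy changes along a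
trajectory only through the explicit time dependence, so `h' = B`, and then
`t (t - 1) h'' = {B, A + t B} = {B, A}`. Since moreover `2 h - (2 t - 1) h' = 2 A + B`, the time
drops out of the equation, which becomes a polynomial relation between `A`, `B` and `{B, A}` on
phase space.
-/

section HamiltonianMechanics

variable {𝕜 : Type*} [NontriviallyNormedField 𝕜]

/-- The canonical Poisson bracket `{F, G} = ∂F/∂q ∂G/∂p - ∂F/∂p ∂G/∂q` of functions of one
position and one momentum variable, which gives the evolution of observables along Hamiltonian
trajectories. The partial derivatives are `deriv`s of the sections, hence `0` where a section is not
differentiable. -/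
noncomputable def poissonBracket (F G : 𝕜 → 𝕜 → 𝕜) (x y : 𝕜) : 𝕜 :=
  deriv (fun x' => F x' y) x * deriv (G x) y - deriv (F x) y * deriv (fun x' => G x' y) x

/-- The curve `(q, p)` satisfies Hamilton's equations `τ q' = ∂G/∂p`, `τ p' = -∂G/∂q` at time `t`.
The Hamiltonian `G` is the one frozen at time `t`, and `τ` is the value at `t` of the factor that
rescales the time derivative. -/
structure IsHamiltonianAt (τ : 𝕜) (G : 𝕜 → 𝕜 → 𝕜) (q p : 𝕜 → 𝕜) (t : 𝕜) : Prop where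
  differentiableAt_position : DifferentiableAt 𝕜 q t
  differentiableAt_momentum : DifferentiableAt 𝕜 p t
  mul_deriv_position : τ * deriv q t = deriv (G (q t)) (p t)
  mul_deriv_momentum : τ * deriv p t = -deriv (fun x => G x (p t)) (q t)

theorem poissonBracket_self (F : 𝕜 → 𝕜 → 𝕜) (x y : 𝕜) : poissonBracket F F x y = 0 := by
  rw [poissonBracket, mul_comm, sub_self]

theorem poissonBracket_add_const_right (F G : 𝕜 → 𝕜 → 𝕜) (c x y : 𝕜) :
    poissonBracket F (fun x' y' => G x' y' + c) x y = poissonBracket F G x y := by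
  simp only [poissonBracket, deriv_add_const]

theorem differentiableAt_section_fst {F : 𝕜 → 𝕜 → 𝕜} {x y : 𝕜}
    (hF : DifferentiableAt 𝕜 (Function.uncurry F) (x, y)) :
    DifferentiableAt 𝕜 (fun x' => F x' y) x :=
  hF.comp (f := fun x' => (x', y)) x (differentiableAt_id.prodMk (differentiableAt_const y))

theorem differentiableAt_section_snd {F : 𝕜 → 𝕜 → 𝕜} {x y : 𝕜}
    (hF : DifferentiableAt 𝕜 (Function.uncurry F) (x, y)) :
    DifferentiableAt 𝕜 (F x) y :=
  hF.comp (f := fun y' => (x, y')) y ((differentiableAt_const x).prodMk differentiableAt_id)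

theorem poissonBracket_add_const_mul_self_right {F G : 𝕜 → 𝕜 → 𝕜} {x y : 𝕜} (a : 𝕜)
    (hF : DifferentiableAt 𝕜 (Function.uncurry F) (x, y))
    (hG : DifferentiableAt 𝕜 (Function.uncurry G) (x, y)) :
    poissonBracket F (fun x' y' => G x' y' + a * F x' y') x y = poissonBracket F G x y := by
  have deriv_fst : deriv (fun x' => G x' y + a * F x' y) x
      = deriv (fun x' => G x' y) x + a * deriv (fun x' => F x' y) x :=
    ((differentiableAt_section_fst hG).hasDerivAt.add
      ((differentiableAt_section_fst hF).hasDerivAt.const_mul a)).deriv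
  have deriv_snd : deriv (fun y' => G x y' + a * F x y') y
      = deriv (G x) y + a * deriv (F x) y :=
    ((differentiableAt_section_snd hG).hasDerivAt.add
      ((differentiableAt_section_snd hF).hasDerivAt.const_mul a)).deriv
  rw [poissonBracket, deriv_fst, deriv_snd, poissonBracket]
  ring

theorem hasDerivAt_uncurry_comp {F : 𝕜 → 𝕜 → 𝕜} {q p : 𝕜 → 𝕜} {q' p' t : 𝕜}
    (hF : DifferentiableAt 𝕜 (Function.uncurry F) (q t, p t))
    (hq : HasDerivAt q q' t) (hp : HasDerivAt p p' t) :
    HasDerivAt (fun s => F (q s) (p s))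
      (deriv (fun x => F x (p t)) (q t) * q' + deriv (F (q t)) (p t) * p') t := by
  set L := fderiv 𝕜 (Function.uncurry F) (q t, p t)
  have deriv_fst : deriv (fun x => F x (p t)) (q t) = L (1, 0) :=
    (hF.hasFDerivAt.comp_hasDerivAt (f := fun x => (x, p t)) (q t)
      ((hasDerivAt_id (q t)).prodMk (hasDerivAt_const (q t) (p t)))).deriv
  have deriv_snd : deriv (F (q t)) (p t) = L (0, 1) :=
    (hF.hasFDerivAt.comp_hasDerivAt (f := fun y => (q t, y)) (p t)
      ((hasDerivAt_const (p t) (q t)).prodMk (hasDerivAt_id (p t)))).deriv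
  have apply_velocity : L (q', p') = L (1, 0) * q' + L (0, 1) * p' := by
    have decomp : ((q', p') : 𝕜 × 𝕜) = q' • (1, 0) + p' • (0, 1) := by simp
    rw [decomp, map_add, map_smul, map_smul, smul_eq_mul, smul_eq_mul, mul_comm q', mul_comm p']
  rw [deriv_fst, deriv_snd, ← apply_velocity]
  exact hF.hasFDerivAt.comp_hasDerivAt t (hq.prodMk hp)

namespace IsHamiltonianAt

variable {τ c t : 𝕜} {A B F G : 𝕜 → 𝕜 → 𝕜} {q p : 𝕜 → 𝕜}

theorem differentiableAt_comp (hqp : IsHamiltonianAt τ G q p t)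
    (hF : DifferentiableAt 𝕜 (Function.uncurry F) (q t, p t)) :
    DifferentiableAt 𝕜 (fun s => F (q s) (p s)) t :=
  (hasDerivAt_uncurry_comp hF hqp.differentiableAt_position.hasDerivAt
    hqp.differentiableAt_momentum.hasDerivAt).differentiableAt

theorem mul_deriv_comp (hqp : IsHamiltonianAt τ G q p t)
    (hF : DifferentiableAt 𝕜 (Function.uncurry F) (q t, p t)) :
    τ * deriv (fun s => F (q s) (p s)) t = poissonBracket F G (q t) (p t) := by
  rw [(hasDerivAt_uncurry_comp hF hqp.differentiableAt_position.hasDerivAt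
    hqp.differentiableAt_momentum.hasDerivAt).deriv, poissonBracket]
  linear_combination deriv (fun x => F x (p t)) (q t) * hqp.mul_deriv_position
    + deriv (F (q t)) (p t) * hqp.mul_deriv_momentum

theorem mul_deriv_slope (hqp : IsHamiltonianAt τ (fun x y => A x y + t * B x y + c) q p t)
    (hA : DifferentiableAt 𝕜 (Function.uncurry A) (q t, p t))
    (hB : DifferentiableAt 𝕜 (Function.uncurry B) (q t, p t)) :
    τ * deriv (fun s => B (q s) (p s)) t = poissonBracket B A (q t) (p t) := by
  rw [hqp.mul_deriv_comp hB, poissonBracket_add_const_right,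
    poissonBracket_add_const_mul_self_right t hB hA]

theorem deriv_energy (hqp : IsHamiltonianAt τ (fun x y => A x y + t * B x y + c) q p t)
    (hτ : τ ≠ 0) (hA : DifferentiableAt 𝕜 (Function.uncurry A) (q t, p t))
    (hB : DifferentiableAt 𝕜 (Function.uncurry B) (q t, p t)) :
    deriv (fun s => A (q s) (p s) + s * B (q s) (p s)) t = B (q t) (p t) := by
  set E : 𝕜 → 𝕜 → 𝕜 := fun x y => A x y + t * B x y
  have hE : DifferentiableAt 𝕜 (Function.uncurry E) (q t, p t) := hA.add (hB.const_mul t)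
  have frozen_energy_conserved : deriv (fun s => E (q s) (p s)) t = 0 := by
    apply mul_left_cancel₀ hτ
    rw [hqp.mul_deriv_comp hE, poissonBracket_add_const_right, poissonBracket_self, mul_zero]
  have energy_eq : (fun s => A (q s) (p s) + s * B (q s) (p s))
      = fun s => E (q s) (p s) + (s - t) * B (q s) (p s) := by
    funext s
    ring
  have hasDerivAt_energy := (hqp.differentiableAt_comp hE).hasDerivAt.add
    (((hasDerivAt_id' t).sub_const t).mul (hqp.differentiableAt_comp hB).hasDerivAt)
  rw [energy_eq]
  refine hasDerivAt_energy.deriv.trans ?_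
  rw [frozen_energy_conserved]
  ring

end IsHamiltonianAt

end HamiltonianMechanics

theorem deriv_cubic {𝕜 : Type*} [NontriviallyNormedField 𝕜] (a b c d x : 𝕜) :
    deriv (fun z => a * z ^ 3 + b * z ^ 2 + c * z + d) x = 3 * a * x ^ 2 + 2 * b * x + c := by
  have hasDerivAt_cubic := ((((hasDerivAt_pow 3 x).const_mul a).add
    ((hasDerivAt_pow 2 x).const_mul b)).add ((hasDerivAt_id' x).const_mul c)).add_const d
  refine hasDerivAt_cubic.deriv.trans ?_
  push_cast
  ring

section PainleveVI

/-- The coefficient `B` of `t` in the shifted Painlevé VI Hamiltonian `A + t B`, in the parameters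
`b₁ = (α₃ + α₄) / 2` and `b₂ = (α₄ - α₃) / 2`. -/
noncomputable def PVISlope (b1 b2 q p : ℂ) : ℂ :=
  -(q * (q - 1) * p ^ 2) + ((2 * q - 1) * b1 - b2) * p - b1 ^ 2

/-- The value `A` at `t = 0` of the shifted Painlevé VI Hamiltonian `A + t B`, in the parameters
`b₁ = (α₃ + α₄) / 2`, `b₂ = (α₄ - α₃) / 2`, `b₃ = (α₀ + α₁ - 1) / 2`, `b₄ = (α₀ - α₁ - 1) / 2`. The
constant is minus one half of their second elementary symmetric polynomial. -/
noncomputable def PVIIntercept (b1 b2 b3 b4 q p : ℂ) : ℂ :=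
  q ^ 2 * (q - 1) * p ^ 2
    - q * ((b3 + b4) * (q - 1) + (b1 - b2) * q + (b1 + b2) * (q - 1)) * p
    + (b1 + b3) * (b1 + b4) * q
    - (b1 * b2 + b3 * b4 + (b1 + b2) * (b3 + b4)) / 2

variable (b1 b2 b3 b4 : ℂ)

theorem differentiable_uncurry_PVISlope :
    Differentiable ℂ (Function.uncurry (PVISlope b1 b2)) := by
  unfold Function.uncurry PVISlope
  fun_prop

theorem differentiable_uncurry_PVIIntercept :
    Differentiable ℂ (Function.uncurry (PVIIntercept b1 b2 b3 b4)) := by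
  unfold Function.uncurry PVIIntercept
  fun_prop

-- The arguments are `α₀, …, α₄` solved for in terms of `b₁, …, b₄` using
-- `α₀ + α₁ + 2 α₂ + α₃ + α₄ = 1`.
theorem PVIHamiltonian_eq_intercept_add_slope (q p t : ℂ) :
    PVIHamiltonian (1 + b3 + b4) (b3 - b4) (-(b1 + b3)) (b1 - b2) (b1 + b2) q p t
      = PVIIntercept b1 b2 b3 b4 q p + t * PVISlope b1 b2 q p
        + ((b1 * b2 + b3 * b4 + (b1 + b2) * (b3 + b4)) / 2
          - t * (b1 * b3 + b1 * b4 + b3 * b4)) := by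
  unfold PVIHamiltonian PVIIntercept PVISlope
  ring

theorem PVIModifiedHamiltonian_sub_eq_intercept_add_slope (q p t : ℂ) :
    PVIModifiedHamiltonian (1 + b3 + b4) (b3 - b4) (-(b1 + b3)) (b1 - b2) (b1 + b2) q p t
        - (b1 ^ 2 + b2 ^ 2 + b3 ^ 2 + b4 ^ 2) / 12 * (2 * t - 1)
      = PVIIntercept b1 b2 b3 b4 q p + t * PVISlope b1 b2 q p := by
  rw [PVIModifiedHamiltonian, PVIHamiltonian_eq_intercept_add_slope]
  ring

variable {b1 b2 b3 b4} in
theorem SolvesHamSystem.isHamiltonianAt {U : Set ℂ} {q p : ℂ → ℂ} {t : ℂ}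
    (hsys : SolvesHamSystem (1 + b3 + b4) (b3 - b4) (-(b1 + b3)) (b1 - b2) (b1 + b2) U q p)
    (hU : IsOpen U) (hq : DifferentiableOn ℂ q U) (hp : DifferentiableOn ℂ p U) (ht : t ∈ U) :
    IsHamiltonianAt (t * (t - 1))
      (fun x y => PVIIntercept b1 b2 b3 b4 x y + t * PVISlope b1 b2 x y
        + ((b1 * b2 + b3 * b4 + (b1 + b2) * (b3 + b4)) / 2
          - t * (b1 * b3 + b1 * b4 + b3 * b4))) q p t := by
  simp only [← PVIHamiltonian_eq_intercept_add_slope]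
  exact ⟨hq.differentiableAt (hU.mem_nhds ht), hp.differentiableAt (hU.mem_nhds ht),
    (hsys t ht).1, (hsys t ht).2⟩

theorem deriv_PVISlope_position (q p : ℂ) :
    deriv (fun x => PVISlope b1 b2 x p) q = -((2 * q - 1) * p ^ 2) + 2 * b1 * p := by
  convert deriv_cubic 0 (-p ^ 2) (p ^ 2 + 2 * b1 * p) (-(b1 + b2) * p - b1 ^ 2) q using 1
  · congr 1; funext x; unfold PVISlope; ring
  · ring

theorem deriv_PVISlope_momentum (q p : ℂ) :
    deriv (PVISlope b1 b2 q) p = -(2 * q * (q - 1) * p) + (2 * q - 1) * b1 - b2 := by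
  convert deriv_cubic 0 (-(q * (q - 1))) ((2 * q - 1) * b1 - b2) (-b1 ^ 2) p using 1
  · congr 1; funext y; unfold PVISlope; ring
  · ring

theorem deriv_PVIIntercept_position (q p : ℂ) :
    deriv (fun x => PVIIntercept b1 b2 b3 b4 x p) q
      = q * (3 * q - 2) * p ^ 2
        - ((b3 + b4) * (2 * q - 1) + 2 * (b1 - b2) * q + (b1 + b2) * (2 * q - 1)) * p
        + (b1 + b3) * (b1 + b4) := by
  convert deriv_cubic (p ^ 2) (-p ^ 2 - (2 * b1 + b3 + b4) * p)
    ((b1 + b2 + b3 + b4) * p + (b1 + b3) * (b1 + b4))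
    (-(b1 * b2 + b3 * b4 + (b1 + b2) * (b3 + b4)) / 2) q using 1
  · congr 1; funext x; unfold PVIIntercept; ring
  · ring

theorem deriv_PVIIntercept_momentum (q p : ℂ) :
    deriv (PVIIntercept b1 b2 b3 b4 q) p
      = 2 * q ^ 2 * (q - 1) * p
        - q * ((b3 + b4) * (q - 1) + (b1 - b2) * q + (b1 + b2) * (q - 1)) := by
  convert deriv_cubic 0 (q ^ 2 * (q - 1))
    (-(q * ((b3 + b4) * (q - 1) + (b1 - b2) * q + (b1 + b2) * (q - 1))))
    ((b1 + b3) * (b1 + b4) * q - (b1 * b2 + b3 * b4 + (b1 + b2) * (b3 + b4)) / 2) p using 1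
  · congr 1; funext y; unfold PVIIntercept; ring
  · ring

theorem poissonBracket_PVISlope_PVIIntercept_relation (q p : ℂ) :
    PVISlope b1 b2 q p * poissonBracket (PVISlope b1 b2) (PVIIntercept b1 b2 b3 b4) q p ^ 2
        + (PVISlope b1 b2 q p * (2 * PVIIntercept b1 b2 b3 b4 q p + PVISlope b1 b2 q p)
          + b1 * b2 * b3 * b4) ^ 2
      = (PVISlope b1 b2 q p + b1 ^ 2) * (PVISlope b1 b2 q p + b2 ^ 2)
          * (PVISlope b1 b2 q p + b3 ^ 2) * (PVISlope b1 b2 q p + b4 ^ 2) := by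
  rw [poissonBracket, deriv_PVISlope_position, deriv_PVISlope_momentum,
    deriv_PVIIntercept_position, deriv_PVIIntercept_momentum]
  unfold PVISlope PVIIntercept
  ring

end PainleveVI

/-- the E_VI equation for the (shifted) Hamiltonian. -/
theorem EVI_equation
    (α0 α1 α2 α3 α4 : ℂ) (hα : α0 + α1 + 2 * α2 + α3 + α4 = 1)
    (U : Set ℂ) (hUopen : IsOpen U) (hU01 : U ⊆ ({0, 1} : Set ℂ)ᶜ)
    (q p : ℂ → ℂ)
    (hq : DifferentiableOn ℂ q U) (hp : DifferentiableOn ℂ p U)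
    (hsys : SolvesHamSystem α0 α1 α2 α3 α4 U q p)
    (b1 b2 b3 b4 C : ℂ)
    (hb1 : b1 = (α3 + α4) / 2) (hb2 : b2 = (α4 - α3) / 2)
    (hb3 : b3 = (α0 + α1 - 1) / 2) (hb4 : b4 = (α0 - α1 - 1) / 2)
    (hC : C = (α0 - 1) ^ 2 + α1 ^ 2 + α3 ^ 2 + α4 ^ 2)
    (h : ℂ → ℂ)
    (hh : h = fun t => PVIModifiedHamiltonian α0 α1 α2 α3 α4 (q t) (p t) t
        - C / 24 * (2 * t - 1)) :
    ∀ t ∈ U,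
      deriv h t * (t * (t - 1) * deriv (deriv h) t) ^ 2
        + (deriv h t * (2 * h t - (2 * t - 1) * deriv h t) + b1 * b2 * b3 * b4) ^ 2
      = (deriv h t + b1 ^ 2) * (deriv h t + b2 ^ 2)
          * (deriv h t + b3 ^ 2) * (deriv h t + b4 ^ 2) := by
  obtain rfl : α0 = 1 + b3 + b4 := by linear_combination -hb3 - hb4
  obtain rfl : α1 = b3 - b4 := by linear_combination hb4 - hb3
  obtain rfl : α3 = b1 - b2 := by linear_combination hb2 - hb1
  obtain rfl : α4 = b1 + b2 := by linear_combination -hb1 - hb2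
  obtain rfl : α2 = -(b1 + b3) := by linear_combination hα / 2
  have hC24 : C / 24 = (b1 ^ 2 + b2 ^ 2 + b3 ^ 2 + b4 ^ 2) / 12 := by rw [hC]; ring
  simp only [hC24, PVIModifiedHamiltonian_sub_eq_intercept_add_slope] at hh
  have hA := differentiable_uncurry_PVIIntercept b1 b2 b3 b4
  have hB := differentiable_uncurry_PVISlope b1 b2
  have flow := fun t (ht : t ∈ U) => hsys.isHamiltonianAt hUopen hq hp ht
  have deriv_h : ∀ t ∈ U, deriv h t = PVISlope b1 b2 (q t) (p t) := fun t ht => by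
    have hτ : t * (t - 1) ≠ 0 :=
      mul_ne_zero (fun h0 => hU01 ht (.inl h0)) (sub_ne_zero.2 fun h1 => hU01 ht (.inr h1))
    rw [hh, (flow t ht).deriv_energy hτ (hA _) (hB _)]
  intro t ht
  have mul_deriv_deriv_h : t * (t - 1) * deriv (deriv h) t
      = poissonBracket (PVISlope b1 b2) (PVIIntercept b1 b2 b3 b4) (q t) (p t) := by
    rw [(Filter.eventuallyEq_of_mem (hUopen.mem_nhds ht) deriv_h).deriv_eq,
      (flow t ht).mul_deriv_slope (hA _) (hB _)]
  have time_cancels : 2 * h t - (2 * t - 1) * PVISlope b1 b2 (q t) (p t)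
      = 2 * PVIIntercept b1 b2 b3 b4 (q t) (p t) + PVISlope b1 b2 (q t) (p t) := by
    rw [hh]; ring
  rw [mul_deriv_deriv_h, deriv_h t ht, time_cancels]
  exact poissonBracket_PVISlope_PVIIntercept_relation b1 b2 b3 b4 (q t) (p t)
end

section
/- The group defined by the presentation ⟨a, x | a⁶ = 1, x² = a³, axa = x⟩ is isomorphic to the dicyclic group of order 12 (the generalized quaternion/dicyclic group Dic₃, i.e. QuaternionGroup 3). -/
/-- Generators of the presentation ⟨a, x | a⁶ = 1, x² = a³, axa = x⟩. -/
inductive DicGen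
  | a
  | x

/-- The relations of the presentation ⟨a, x | a⁶ = 1, x² = a³, axa = x⟩. -/
def dicRels : Set (FreeGroup DicGen) :=
  { FreeGroup.of DicGen.a ^ 6,
    FreeGroup.of DicGen.x ^ 2 * (FreeGroup.of DicGen.a ^ 3)⁻¹,
    FreeGroup.of DicGen.a * FreeGroup.of DicGen.x * FreeGroup.of DicGen.a
      * (FreeGroup.of DicGen.x)⁻¹ }

/-!
`QuaternionGroup n` and the group presented by `⟨a, x | a²ⁿ = 1, x² = aⁿ, axa = x⟩` have the same
universal property: homomorphisms to `G` correspond to pairs `(A, X)` in `G` satisfying the three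
relations. For the quaternion group, such a pair extends by `aⁱ ↦ Aⁱ`, `xaⁱ ↦ X Aⁱ`. This is
well defined for `i` modulo `2n` because `A²ⁿ = 1`, and the rule `Aⁱ X = X A⁻ⁱ` together with
`X² = Aⁿ` makes it multiplicative.
-/

/-- The defining relations of the dicyclic group of order `4n`, imposed on a pair of elements of an
arbitrary group. As in the presentation, conjugation by `X` inverting `A` is written `A X A = X`. -/
structure IsDicyclicPair {G : Type*} [Group G] (n : ℕ) (A X : G) : Prop where
  pow_two_mul : A ^ (2 * n) = 1
  sq_eq_pow : X ^ 2 = A ^ n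
  mul_mul_eq : A * X * A = X

theorem isDicyclicPair_quaternionGroup (n : ℕ) :
    IsDicyclicPair n (QuaternionGroup.a 1 : QuaternionGroup n) (QuaternionGroup.xa 0) where
  pow_two_mul := QuaternionGroup.a_one_pow_n
  sq_eq_pow := by rw [QuaternionGroup.xa_sq, QuaternionGroup.a_one_pow]
  mul_mul_eq := by simp

theorem zpow_cast_intCast_zmod {G : Type*} [Group G] {A : G} {m : ℕ} (hA : A ^ m = 1) (k : ℤ) :
    A ^ ((k : ZMod m).cast : ℤ) = A ^ k := by
  rw [ZMod.coe_intCast, ← zpow_eq_zpow_emod' k hA]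

namespace IsDicyclicPair

variable {G : Type*} [Group G] {n : ℕ} {A X : G}

theorem zpow_mul_eq (h : IsDicyclicPair n A X) (k : ℤ) : A ^ k * X = X * A ^ (-k) := by
  have semiconj : SemiconjBy X A⁻¹ A := (eq_mul_inv_of_mul_eq h.mul_mul_eq).symm
  rw [← inv_zpow', (semiconj.zpow_right k).eq]

/-- The map `aⁱ ↦ Aⁱ`, `xaⁱ ↦ X Aⁱ` underlying `IsDicyclicPair.lift`, with `i : ZMod (2 * n)`
replaced by its canonical integer representative. -/
def liftFun (A X : G) : QuaternionGroup n → G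
  | .a i => A ^ (i.cast : ℤ)
  | .xa i => X * A ^ (i.cast : ℤ)

theorem liftFun_a_intCast (h : IsDicyclicPair n A X) (k : ℤ) :
    liftFun A X (.a k : QuaternionGroup n) = A ^ k :=
  zpow_cast_intCast_zmod h.pow_two_mul k

theorem liftFun_xa_intCast (h : IsDicyclicPair n A X) (k : ℤ) :
    liftFun A X (.xa k : QuaternionGroup n) = X * A ^ k :=
  congrArg (X * ·) (zpow_cast_intCast_zmod h.pow_two_mul k)

theorem liftFun_mul (h : IsDicyclicPair n A X) (p q : QuaternionGroup n) :
    liftFun A X (p * q) = liftFun A X p * liftFun A X q := by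
  rcases p with i | i <;> rcases q with j | j <;>
    obtain ⟨i, rfl⟩ := ZMod.intCast_surjective i <;>
    obtain ⟨j, rfl⟩ := ZMod.intCast_surjective j
  · rw [QuaternionGroup.a_mul_a, ← Int.cast_add]
    simp only [h.liftFun_a_intCast, zpow_add]
  · rw [QuaternionGroup.a_mul_xa, ← Int.cast_sub]
    simp only [h.liftFun_a_intCast, h.liftFun_xa_intCast]
    rw [← mul_assoc, h.zpow_mul_eq, mul_assoc, ← zpow_add, neg_add_eq_sub]
  · rw [QuaternionGroup.xa_mul_a, ← Int.cast_add]
    simp only [h.liftFun_a_intCast, h.liftFun_xa_intCast, zpow_add, mul_assoc]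
  · rw [QuaternionGroup.xa_mul_xa, ← Int.cast_natCast n, ← Int.cast_add, ← Int.cast_sub]
    simp only [h.liftFun_a_intCast, h.liftFun_xa_intCast]
    calc A ^ (n + j - i)
        = X ^ 2 * (A ^ (-i) * A ^ j) := by
          rw [h.sq_eq_pow, ← zpow_natCast, ← zpow_add, ← zpow_add, neg_add_eq_sub, add_sub_assoc]
      _ = X * (X * A ^ (-i)) * A ^ j := by simp only [sq, mul_assoc]
      _ = X * A ^ i * (X * A ^ j) := by simp only [← h.zpow_mul_eq, mul_assoc]

/-- The homomorphism out of the quaternion group determined by a dicyclic pair; this is the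
existence half of the universal property of `QuaternionGroup n`. -/
def lift (h : IsDicyclicPair n A X) : QuaternionGroup n →* G :=
  MonoidHom.mk' (liftFun A X) h.liftFun_mul

theorem lift_a_one (h : IsDicyclicPair n A X) : h.lift (.a 1) = A := by
  change liftFun A X (.a 1 : QuaternionGroup n) = A
  rw [← Int.cast_one, h.liftFun_a_intCast, zpow_one]

theorem lift_xa_zero (h : IsDicyclicPair n A X) : h.lift (.xa 0) = X := by
  change liftFun A X (.xa 0 : QuaternionGroup n) = X
  rw [← Int.cast_zero, h.liftFun_xa_intCast, zpow_zero, mul_one]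

end IsDicyclicPair

theorem quaternionGroup_a_one_zpow {n : ℕ} (k : ℤ) :
    (QuaternionGroup.a 1 : QuaternionGroup n) ^ k = QuaternionGroup.a k := by
  cases k with
  | ofNat k => simp
  | negSucc k =>
    rw [zpow_negSucc, QuaternionGroup.a_one_pow, Int.cast_negSucc]
    rfl

theorem quaternionGroup_hom_ext {G : Type*} [Group G] {n : ℕ} {f g : QuaternionGroup n →* G}
    (ha : f (.a 1) = g (.a 1)) (hx : f (.xa 0) = g (.xa 0)) : f = g := by
  have agree_on_a (i : ZMod (2 * n)) : f (.a i) = g (.a i) := by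
    obtain ⟨k, rfl⟩ := ZMod.intCast_surjective i
    rw [← quaternionGroup_a_one_zpow, map_zpow, map_zpow, ha]
  ext (i | i)
  · exact agree_on_a i
  · have xa_eq : (QuaternionGroup.xa i : QuaternionGroup n) = .xa 0 * .a i := by
      rw [QuaternionGroup.xa_mul_a, zero_add]
    rw [xa_eq, map_mul, map_mul, hx, agree_on_a]

/-- The relators of the presentation `⟨a, x | a²ⁿ = 1, x² = aⁿ, axa = x⟩`; the case `n = 3` is
`dicRels`. -/
def dicyclicRels (n : ℕ) : Set (FreeGroup DicGen) :=
  { FreeGroup.of DicGen.a ^ (2 * n),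
    FreeGroup.of DicGen.x ^ 2 * (FreeGroup.of DicGen.a ^ n)⁻¹,
    FreeGroup.of DicGen.a * FreeGroup.of DicGen.x * FreeGroup.of DicGen.a
      * (FreeGroup.of DicGen.x)⁻¹ }

theorem isDicyclicPair_presentedGroup (n : ℕ) :
    IsDicyclicPair n (PresentedGroup.of DicGen.a : PresentedGroup (dicyclicRels n))
      (PresentedGroup.of DicGen.x) where
  pow_two_mul := PresentedGroup.one_of_mem (rels := dicyclicRels n) (.inl rfl)
  sq_eq_pow := PresentedGroup.mk_eq_mk_of_mul_inv_mem (rels := dicyclicRels n) (.inr (.inl rfl))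
  mul_mul_eq := PresentedGroup.mk_eq_mk_of_mul_inv_mem (rels := dicyclicRels n) (.inr (.inr rfl))

theorem IsDicyclicPair.freeGroup_lift_eq_one {G : Type*} [Group G] {n : ℕ} {f : DicGen → G}
    (h : IsDicyclicPair n (f .a) (f .x)) : ∀ r ∈ dicyclicRels n, FreeGroup.lift f r = 1 := by
  rintro r (rfl | rfl | rfl) <;>
    simp only [map_mul, map_pow, map_inv, FreeGroup.lift_apply_of, mul_inv_eq_one]
  exacts [h.pow_two_mul, h.sq_eq_pow, h.mul_mul_eq]

theorem presentedGroup_iso_dicyclic_general (n : ℕ) :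
    Nonempty (PresentedGroup (dicyclicRels n) ≃* QuaternionGroup n) := by
  let generatorImage : DicGen → QuaternionGroup n
    | .a => .a 1
    | .x => .xa 0
  have relators_map_one : ∀ r ∈ dicyclicRels n, FreeGroup.lift generatorImage r = 1 :=
    (isDicyclicPair_quaternionGroup n).freeGroup_lift_eq_one
  let toQuaternion : PresentedGroup (dicyclicRels n) →* QuaternionGroup n :=
    PresentedGroup.toGroup relators_map_one
  have toQuaternion_of (d : DicGen) : toQuaternion (.of d) = generatorImage d :=
    PresentedGroup.toGroup.of relators_map_one
  have pair := isDicyclicPair_presentedGroup n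
  refine ⟨toQuaternion.toMulEquiv pair.lift (PresentedGroup.ext ?_) (quaternionGroup_hom_ext ?_ ?_)⟩
  · rintro (_ | _)
    · exact (congrArg pair.lift (toQuaternion_of .a)).trans pair.lift_a_one
    · exact (congrArg pair.lift (toQuaternion_of .x)).trans pair.lift_xa_zero
  · exact (congrArg toQuaternion pair.lift_a_one).trans (toQuaternion_of .a)
  · exact (congrArg toQuaternion pair.lift_xa_zero).trans (toQuaternion_of .x)

/-- the group presented by ⟨a, x | a⁶ = 1, x² = a³, axa = x⟩ is
isomorphic to the dicyclic group Dic₃ of order 12. -/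
theorem presentedGroup_iso_dicyclic :
    Nonempty (PresentedGroup dicRels ≃* QuaternionGroup 3) :=
  presentedGroup_iso_dicyclic_general 3
end

section
/- For τ in the complex upper half-plane, p = e^{πiτ} and ω = e^{2πi/3}: θ(pω;p²) = e^{πiτ/12}·φ3(τ)/φ5(τ), θ(−ω;p²) = −ω²e^{−πiτ/6}·φ4(τ)/φ5(τ), θ(ω;p²) = (1−ω)e^{−πiτ/6}·φ5(τ), and θ(−pω;p²) = e^{πiτ/12}·φ5(τ)²/(φ3(τ)φ4(τ)). -/
open Complex

/-- The theta product θ(x;p) = ∏_{j≥0} (1 - pʲx)(1 - pʲ⁺¹x⁻¹). -/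
noncomputable def jtheta (x p : ℂ) : ℂ :=
  ∏' j : ℕ, ((1 - p ^ j * x) * (1 - p ^ (j + 1) * x⁻¹))

/-- Dedekind's eta function η(τ) = e^{πiτ/12} ∏_{j≥1} (1 - e^{2πijτ}). -/
noncomputable def dedekindEta (τ : ℂ) : ℂ :=
  Complex.exp ((Real.pi : ℂ) * Complex.I * τ / 12) *
    ∏' j : ℕ, (1 - Complex.exp (2 * (Real.pi : ℂ) * Complex.I * (j + 1) * τ))

/-- The eta quotient φ₁ = η(τ/2)²/η(τ)². -/
noncomputable def phi1 (τ : ℂ) : ℂ := dedekindEta (τ / 2) ^ 2 / dedekindEta τ ^ 2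

/-- The eta quotient φ₂ = η(2τ)²/η(τ)². -/
noncomputable def phi2 (τ : ℂ) : ℂ := dedekindEta (2 * τ) ^ 2 / dedekindEta τ ^ 2

/-- The eta quotient φ₃ = η(3τ/2)/η(τ/2). -/
noncomputable def phi3 (τ : ℂ) : ℂ := dedekindEta (3 * τ / 2) / dedekindEta (τ / 2)

/-- The eta quotient φ₄ = η(6τ)/η(2τ). -/
noncomputable def phi4 (τ : ℂ) : ℂ := dedekindEta (6 * τ) / dedekindEta (2 * τ)

/-- The eta quotient φ₅ = η(3τ)/η(τ). -/
noncomputable def phi5 (τ : ℂ) : ℂ := dedekindEta (3 * τ) / dedekindEta τ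

/-!
Write `(a; q)` for the infinite `q`-Pochhammer symbol. Then `θ(x; q) = (x; q) (q / x; q)`, and
if `ω` is a primitive cube root of unity, then `1 - a³ = (1 - a) (1 - ωa) (1 - ω²a)` gives
`(ωa; q) (ω²a; q) = (a³; q³) / (a; q)`. For `q = p²`, the theta values at `±pω` are such products
with `a = ±p`, and those at `±ω` are `1 ∓ ω` times such products with `a = ±p²`. Euler's identities
express these `(a; q)` through `E(q) = (q; q)`, so that every theta value becomes a quotient of
values of `E(q³) / E(q)`. Up to powers of `e^{πiτ/12}`, the values of this ratio at `p`, `p²`, `p⁴`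
are `φ₃`, `φ₅`, `φ₄`.
-/

section qPochhammer

variable {K : Type*} [NormedField K]

/-- The infinite `q`-Pochhammer symbol `(a; q)_∞ = ∏_{n ≥ 0} (1 - a qⁿ)`, from which theta and eta
functions are built; it is meaningful for `‖q‖ < 1`. -/
noncomputable def qPochhammer (a q : K) : K := ∏' n : ℕ, (1 - a * q ^ n)

/-- Euler's function `E(q) = (q; q)_∞ = ∏_{n ≥ 1} (1 - qⁿ)`, which is Dedekind's eta function
without its exponential factor. -/
noncomputable def eulerFunction (q : K) : K := qPochhammer q q

/-- The ratio `E(q³) / E(q)` of values of Euler's function, to which the eta quotients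
`η(3τ) / η(τ)` reduce. -/
noncomputable def eulerTriplingRatio (q : K) : K := eulerFunction (q ^ 3) / eulerFunction q

lemma norm_pow_lt_one {q : K} (hq : ‖q‖ < 1) {n : ℕ} (hn : n ≠ 0) : ‖q ^ n‖ < 1 := by
  rw [norm_pow]
  exact pow_lt_one₀ (norm_nonneg q) hq hn

lemma summable_norm_neg_mul_pow (a : K) {q : K} (hq : ‖q‖ < 1) :
    Summable fun n : ℕ ↦ ‖-(a * q ^ n)‖ := by
  simpa using (summable_geometric_of_lt_one (norm_nonneg q) hq).mul_left ‖a‖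

variable [CompleteSpace K] {q : K}

lemma multipliable_one_sub_mul_pow (a : K) (hq : ‖q‖ < 1) :
    Multipliable fun n : ℕ ↦ 1 - a * q ^ n := by
  simpa only [sub_eq_add_neg] using
    multipliable_one_add_of_summable (summable_norm_neg_mul_pow a hq)

lemma qPochhammer_ne_zero {a : K} (hq : ‖q‖ < 1) (h : ∀ n : ℕ, a * q ^ n ≠ 1) :
    qPochhammer a q ≠ 0 := by
  simpa only [qPochhammer, sub_eq_add_neg] using
    tprod_one_add_ne_zero_of_summable (f := fun n : ℕ ↦ -(a * q ^ n))
      (fun n ↦ by simpa only [← sub_eq_add_neg] using sub_ne_zero.2 (h n).symm)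
      (summable_norm_neg_mul_pow a hq)

lemma qPochhammer_ne_zero_of_norm_lt_one {a : K} (hq : ‖q‖ < 1) (ha : ‖a‖ < 1) :
    qPochhammer a q ≠ 0 := by
  refine qPochhammer_ne_zero hq fun n hn ↦ ?_
  have norm_lt : ‖a * q ^ n‖ < 1 := by
    rw [norm_mul, norm_pow]
    exact mul_lt_one_of_nonneg_of_lt_one_left (norm_nonneg a) ha
      (pow_le_one₀ (norm_nonneg q) hq.le)
  simp [hn] at norm_lt

lemma qPochhammer_eq_one_sub_mul (a : K) (hq : ‖q‖ < 1) :
    qPochhammer a q = (1 - a) * qPochhammer (a * q) q := by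
  have shift (n : ℕ) : a * q * q ^ n = a * q ^ (n + 1) := by ring
  have multipliable_tail := multipliable_one_sub_mul_pow (a * q) hq
  simp only [shift] at multipliable_tail
  simp only [qPochhammer, shift]
  simpa only [pow_zero, mul_one] using
    tprod_eq_zero_mul' (f := fun n ↦ 1 - a * q ^ n) multipliable_tail

lemma qPochhammer_even_mul_odd (a : K) (hq : ‖q‖ < 1) :
    qPochhammer a (q ^ 2) * qPochhammer (a * q) (q ^ 2) = qPochhammer a q := by
  have hq2 : ‖q ^ 2‖ < 1 := norm_pow_lt_one hq two_ne_zero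
  have even (n : ℕ) : a * (q ^ 2) ^ n = a * q ^ (2 * n) := by rw [pow_mul]
  have odd (n : ℕ) : a * q * (q ^ 2) ^ n = a * q ^ (2 * n + 1) := by ring
  have multipliable_even := multipliable_one_sub_mul_pow a hq2
  have multipliable_odd := multipliable_one_sub_mul_pow (a * q) hq2
  simp only [even] at multipliable_even
  simp only [odd] at multipliable_odd
  simpa only [qPochhammer, even, odd] using
    tprod_even_mul_odd (f := fun n ↦ 1 - a * q ^ n) multipliable_even multipliable_odd

lemma qPochhammer_mul_qPochhammer_neg (a : K) (hq : ‖q‖ < 1) :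
    qPochhammer a q * qPochhammer (-a) q = qPochhammer (a ^ 2) (q ^ 2) := by
  simp only [qPochhammer]
  rw [← (multipliable_one_sub_mul_pow a hq).tprod_mul (multipliable_one_sub_mul_pow (-a) hq)]
  exact tprod_congr fun n ↦ by ring

lemma prod_qPochhammer_primitiveRoot_pow_mul {ζ : K} {m : ℕ} (hζ : IsPrimitiveRoot ζ m)
    (hm : 0 < m) (a : K) (hq : ‖q‖ < 1) :
    ∏ i ∈ Finset.range m, qPochhammer (ζ ^ i * a) q = qPochhammer (a ^ m) (q ^ m) := by
  simp only [qPochhammer]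
  rw [← Multipliable.tprod_finsetProd fun i _ ↦ multipliable_one_sub_mul_pow (ζ ^ i * a) hq]
  refine tprod_congr fun n ↦ ?_
  have factorization := congrArg (Polynomial.eval 1)
    (X_pow_sub_C_eq_prod hζ hm (rfl : (a * q ^ n) ^ m = (a * q ^ n) ^ m))
  simp only [Polynomial.eval_sub, Polynomial.eval_pow, Polynomial.eval_X, Polynomial.eval_C,
    Polynomial.eval_prod, one_pow, mul_pow, pow_right_comm q n m] at factorization
  simp only [factorization, mul_assoc]

lemma qPochhammer_cubeRoot_mul_qPochhammer_cubeRoot_sq {ω a : K} (hω : IsPrimitiveRoot ω 3)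
    (hq : ‖q‖ < 1) (ha : ‖a‖ < 1) :
    qPochhammer (ω * a) q * qPochhammer (ω ^ 2 * a) q
      = qPochhammer (a ^ 3) (q ^ 3) / qPochhammer a q := by
  have h := prod_qPochhammer_primitiveRoot_pow_mul hω three_pos a hq
  simp only [Finset.prod_range_succ, Finset.prod_range_zero, pow_zero, pow_one, one_mul] at h
  rw [eq_div_iff (qPochhammer_ne_zero_of_norm_lt_one hq ha), ← h]
  ring

lemma eulerFunction_ne_zero (hq : ‖q‖ < 1) : eulerFunction q ≠ 0 :=
  qPochhammer_ne_zero_of_norm_lt_one hq hq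

lemma qPochhammer_self_sq (hq : ‖q‖ < 1) :
    qPochhammer q (q ^ 2) = eulerFunction q / eulerFunction (q ^ 2) := by
  rw [eq_div_iff (eulerFunction_ne_zero (norm_pow_lt_one hq two_ne_zero))]
  simpa only [eulerFunction, ← sq] using qPochhammer_even_mul_odd q hq

lemma qPochhammer_neg_self (hq : ‖q‖ < 1) :
    qPochhammer (-q) q = eulerFunction (q ^ 2) / eulerFunction q := by
  rw [eq_div_iff (eulerFunction_ne_zero hq), mul_comm]
  exact qPochhammer_mul_qPochhammer_neg q hq

lemma qPochhammer_neg_self_sq (hq : ‖q‖ < 1) :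
    qPochhammer (-q) (q ^ 2)
      = eulerFunction (q ^ 2) ^ 2 / (eulerFunction q * eulerFunction (q ^ 4)) := by
  have hq2 : ‖q ^ 2‖ < 1 := norm_pow_lt_one hq two_ne_zero
  have h := qPochhammer_mul_qPochhammer_neg q hq2
  rw [qPochhammer_self_sq hq, qPochhammer_self_sq hq2, ← pow_mul] at h
  have hE1 := eulerFunction_ne_zero hq
  have hE2 := eulerFunction_ne_zero hq2
  have hE4 := eulerFunction_ne_zero (norm_pow_lt_one hq four_ne_zero)
  field_simp at h ⊢
  linear_combination h

end qPochhammer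

lemma inv_eq_sq_of_pow_three_eq_one {M : Type*} [DivisionMonoid M] {x : M} (hx : x ^ 3 = 1) :
    x⁻¹ = x ^ 2 :=
  inv_eq_of_mul_eq_one_right (by rw [← pow_succ', hx])

section jtheta

variable {q ω : ℂ}

lemma jtheta_eq_qPochhammer_mul (x : ℂ) (hq : ‖q‖ < 1) :
    jtheta x q = qPochhammer x q * qPochhammer (q * x⁻¹) q := by
  simp only [jtheta, qPochhammer]
  rw [← (multipliable_one_sub_mul_pow x hq).tprod_mul
    (multipliable_one_sub_mul_pow (q * x⁻¹) hq)]
  exact tprod_congr fun n ↦ by ring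

lemma jtheta_self_mul_cubeRoot_eq_qPochhammer_div {x : ℂ} (hω : IsPrimitiveRoot ω 3)
    (hx₀ : x ≠ 0) (hx : ‖x‖ < 1) :
    jtheta (x * ω) (x ^ 2) = qPochhammer (x ^ 3) ((x ^ 3) ^ 2) / qPochhammer x (x ^ 2) := by
  have hx2 : ‖x ^ 2‖ < 1 := norm_pow_lt_one hx two_ne_zero
  have reflect : x ^ 2 * (x * ω)⁻¹ = ω ^ 2 * x := by
    rw [mul_inv, inv_eq_sq_of_pow_three_eq_one hω.pow_eq_one]
    field_simp
  rw [jtheta_eq_qPochhammer_mul _ hx2, reflect, mul_comm x,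
    qPochhammer_cubeRoot_mul_qPochhammer_cubeRoot_sq hω hx2 hx, ← pow_mul, ← pow_mul]

lemma jtheta_sign_mul_cubeRoot_eq_qPochhammer_div {ε : ℂ} (hω : IsPrimitiveRoot ω 3)
    (hε : ε ^ 2 = 1) (hq : ‖q‖ < 1) :
    jtheta (ε * ω) q
      = (1 - ε * ω) * (qPochhammer (ε * q ^ 3) (q ^ 3) / qPochhammer (ε * q) q) := by
  have inv_ε : ε⁻¹ = ε := inv_eq_of_mul_eq_one_right (by rw [← sq, hε])
  have norm_εq : ‖ε * q‖ < 1 := by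
    rwa [norm_mul, norm_eq_one_of_pow_eq_one hε two_ne_zero, one_mul]
  have cube : (ε * q) ^ 3 = ε * q ^ 3 := by linear_combination ε * q ^ 3 * hε
  have shift : ε * ω * q = ω * (ε * q) := by ring
  have reflect : q * (ε * ω)⁻¹ = ω ^ 2 * (ε * q) := by
    rw [mul_inv, inv_ε, inv_eq_sq_of_pow_three_eq_one hω.pow_eq_one]
    ring
  rw [jtheta_eq_qPochhammer_mul _ hq, qPochhammer_eq_one_sub_mul _ hq, shift, reflect, mul_assoc,
    qPochhammer_cubeRoot_mul_qPochhammer_cubeRoot_sq hω hq norm_εq, cube]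

lemma jtheta_self_mul_cubeRoot {p : ℂ} (hω : IsPrimitiveRoot ω 3) (hp₀ : p ≠ 0)
    (hp : ‖p‖ < 1) :
    jtheta (p * ω) (p ^ 2) = eulerTriplingRatio p / eulerTriplingRatio (p ^ 2) := by
  rw [jtheta_self_mul_cubeRoot_eq_qPochhammer_div hω hp₀ hp, qPochhammer_self_sq hp,
    qPochhammer_self_sq (norm_pow_lt_one hp three_ne_zero), pow_right_comm p 3 2,
    div_div_div_comm, eulerTriplingRatio, eulerTriplingRatio]

lemma jtheta_neg_self_mul_cubeRoot {p : ℂ} (hω : IsPrimitiveRoot ω 3) (hp₀ : p ≠ 0)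
    (hp : ‖p‖ < 1) :
    jtheta (-(p * ω)) (p ^ 2)
      = eulerTriplingRatio (p ^ 2) ^ 2 / (eulerTriplingRatio p * eulerTriplingRatio (p ^ 4)) := by
  have h := jtheta_self_mul_cubeRoot_eq_qPochhammer_div hω (neg_ne_zero.2 hp₀) (by rwa [norm_neg])
  rw [neg_mul, neg_sq, Odd.neg_pow (by decide : Odd 3), neg_sq, qPochhammer_neg_self_sq hp,
    qPochhammer_neg_self_sq (norm_pow_lt_one hp three_ne_zero)] at h
  simp only [h, eulerTriplingRatio, pow_right_comm p 3 2, pow_right_comm p 3 4, div_pow,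
    div_mul_div_comm, div_div_div_comm]

lemma jtheta_cubeRoot (hω : IsPrimitiveRoot ω 3) (hq : ‖q‖ < 1) :
    jtheta ω q = (1 - ω) * eulerTriplingRatio q := by
  simpa only [one_mul, eulerTriplingRatio, eulerFunction] using
    jtheta_sign_mul_cubeRoot_eq_qPochhammer_div hω (one_pow 2) hq

lemma jtheta_neg_cubeRoot (hω : IsPrimitiveRoot ω 3) (hq : ‖q‖ < 1) :
    jtheta (-ω) q = -ω ^ 2 * (eulerTriplingRatio (q ^ 2) / eulerTriplingRatio q) := by
  have one_add_ω : 1 - -ω = -ω ^ 2 := by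
    have geom_sum := hω.geom_sum_eq_zero (by decide)
    simp only [Finset.sum_range_succ, Finset.sum_range_zero, pow_zero, pow_one] at geom_sum
    linear_combination geom_sum
  have h := jtheta_sign_mul_cubeRoot_eq_qPochhammer_div hω (neg_one_sq : (-1 : ℂ) ^ 2 = 1) hq
  simp only [neg_one_mul] at h
  rw [h, one_add_ω, qPochhammer_neg_self hq,
    qPochhammer_neg_self (norm_pow_lt_one hq three_ne_zero), pow_right_comm q 3 2,
    div_div_div_comm, eulerTriplingRatio, eulerTriplingRatio]

end jtheta

section dedekindEta

open scoped Real

lemma dedekindEta_eq_exp_mul_eulerFunction (τ : ℂ) :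
    dedekindEta τ = exp (π * I * τ / 12) * eulerFunction (exp (2 * π * I * τ)) := by
  simp only [dedekindEta, eulerFunction, qPochhammer]
  congr 1
  refine tprod_congr fun n ↦ ?_
  rw [← pow_succ', ← exp_nat_mul]
  push_cast
  ring_nf

lemma dedekindEta_three_mul_div (τ : ℂ) :
    dedekindEta (3 * τ) / dedekindEta τ
      = exp (π * I * τ / 6) * eulerTriplingRatio (exp (2 * π * I * τ)) := by
  have exp_factor : exp (π * I * (3 * τ) / 12) / exp (π * I * τ / 12) = exp (π * I * τ / 6) := by
    rw [← exp_sub]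
    ring_nf
  have nome_cube : exp (2 * π * I * (3 * τ)) = exp (2 * π * I * τ) ^ 3 := by
    rw [← exp_nat_mul]
    push_cast
    ring_nf
  rw [dedekindEta_eq_exp_mul_eulerFunction, dedekindEta_eq_exp_mul_eulerFunction τ,
    mul_div_mul_comm, exp_factor, nome_cube, eulerTriplingRatio]

lemma dedekindEta_three_mul_div_of_two_mul_eq {t τ : ℂ} {k : ℕ} (ht : 2 * t = k * τ) :
    dedekindEta (3 * t) / dedekindEta t
      = exp (π * I * τ / 12) ^ k * eulerTriplingRatio (exp (π * I * τ) ^ k) := by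
  rw [dedekindEta_three_mul_div, ← exp_nat_mul, ← exp_nat_mul]
  congr 3
  · linear_combination π * I / 12 * ht
  · linear_combination π * I * ht

lemma phi3_eq_exp_mul (τ : ℂ) :
    phi3 τ = exp (π * I * τ / 12) * eulerTriplingRatio (exp (π * I * τ)) := by
  simpa only [phi3, mul_div_assoc, pow_one] using
    dedekindEta_three_mul_div_of_two_mul_eq (t := τ / 2) (τ := τ) (k := 1) (by push_cast; ring)

lemma phi4_eq_exp_mul (τ : ℂ) :
    phi4 τ = exp (π * I * τ / 12) ^ 4 * eulerTriplingRatio (exp (π * I * τ) ^ 4) := by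
  rw [← dedekindEta_three_mul_div_of_two_mul_eq (t := 2 * τ) (by push_cast; ring), phi4]
  ring_nf

lemma phi5_eq_exp_mul (τ : ℂ) :
    phi5 τ = exp (π * I * τ / 12) ^ 2 * eulerTriplingRatio (exp (π * I * τ) ^ 2) :=
  dedekindEta_three_mul_div_of_two_mul_eq (by push_cast; ring)

lemma norm_exp_pi_mul_I_mul_lt_one {τ : ℂ} (hτ : 0 < τ.im) : ‖exp (π * I * τ)‖ < 1 := by
  rw [norm_exp, Real.exp_lt_one_iff]
  simpa using mul_pos Real.pi_pos hτ

end dedekindEta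

/-- theta values at cube roots of unity in terms of φ₃, φ₄, φ₅. -/
theorem theta_eq_eta_quotients_2 (τ : ℂ) (hτ : 0 < τ.im)
    (p ω : ℂ) (hp : p = Complex.exp ((Real.pi : ℂ) * Complex.I * τ))
    (hω : ω = Complex.exp (2 * (Real.pi : ℂ) * Complex.I / 3)) :
    jtheta (p * ω) (p ^ 2)
      = Complex.exp ((Real.pi : ℂ) * Complex.I * τ / 12) * phi3 τ / phi5 τ ∧
    jtheta (-ω) (p ^ 2)
      = -ω ^ 2 * Complex.exp (-((Real.pi : ℂ) * Complex.I * τ) / 6) * phi4 τ / phi5 τ ∧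
    jtheta ω (p ^ 2)
      = (1 - ω) * Complex.exp (-((Real.pi : ℂ) * Complex.I * τ) / 6) * phi5 τ ∧
    jtheta (-(p * ω)) (p ^ 2)
      = Complex.exp ((Real.pi : ℂ) * Complex.I * τ / 12) * phi5 τ ^ 2 / (phi3 τ * phi4 τ) := by
  have hω₃ : IsPrimitiveRoot ω 3 := by
    rw [hω]
    exact_mod_cast isPrimitiveRoot_exp 3 three_ne_zero
  have hp₀ : p ≠ 0 := hp ▸ exp_ne_zero _
  have hp₁ : ‖p‖ < 1 := hp ▸ norm_exp_pi_mul_I_mul_lt_one hτ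
  have hp₂ : ‖p ^ 2‖ < 1 := norm_pow_lt_one hp₁ two_ne_zero
  have exp_neg_sixth : exp (-(Real.pi * I * τ) / 6) = (exp (Real.pi * I * τ / 12) ^ 2)⁻¹ := by
    rw [← exp_nat_mul, ← exp_neg]
    push_cast
    ring_nf
  rw [jtheta_self_mul_cubeRoot hω₃ hp₀ hp₁, jtheta_neg_cubeRoot hω₃ hp₂,
    jtheta_cubeRoot hω₃ hp₂, jtheta_neg_self_mul_cubeRoot hω₃ hp₀ hp₁,
    phi3_eq_exp_mul, phi4_eq_exp_mul, phi5_eq_exp_mul, exp_neg_sixth, ← hp, ← pow_mul]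
  refine ⟨?_, ?_, ?_, ?_⟩ <;> field_simp
end
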